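/- arXiv:1109.6528 — 2 statements merged into one kernel-verified Lean document; each statement's English description precedes it below -/
import Mathlib

section
/- Let M be a horizontally linked R-module of finite G-dimension. Then Gdim_R(M) = 0 if and only if depth_{R_p}(M_p) + depth_{R_p}((λM)_p) > depth R_p for every prime p ∈ Spec R with depth R_p > 0. -/
open CategoryTheory

noncomputable section

universe u

/-- The `i`-th Ext group `Ext^i_R(M,N)`, as a type (with its `R`-module structure). -/
abbrev extM (R : Type u) [CommRing R] (i : ℕ) (M N : Type u) [AddCommGroup M] [Module R M]
    [AddCommGroup N] [Module R N] : Type u :=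
  ((Ext R (ModuleCat.{u} R) i).obj (Opposite.op (ModuleCat.of R M))).obj (ModuleCat.of R N)

/-- The `i`-th Tor group `Tor^R_i(M,N)`, as a type. -/
abbrev torM (R : Type u) [CommRing R] (i : ℕ) (M N : Type u) [AddCommGroup M] [Module R M]
    [AddCommGroup N] [Module R N] : Type u :=
  ((Tor (ModuleCat.{u} R) i).obj (ModuleCat.of R M)).obj (ModuleCat.of R N)

/-- The `i`-th local cohomology `H^i_I(M)`, as a type. -/
abbrev locCoh (R : Type u) [CommRing R] (I : Ideal R) (i : ℕ) (M : Type u) [AddCommGroup M]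
    [Module R M] : Type u :=
  (localCohomology I i).obj (ModuleCat.of R M)

/-- A submodule `N ≤ M` is superfluous if `K ⊔ N = ⊤` implies `K = ⊤`. -/
def Submodule.IsSuperfluous {R M : Type u} [CommRing R] [AddCommGroup M] [Module R M]
    (N : Submodule R M) : Prop :=
  ∀ K : Submodule R M, K ⊔ N = ⊤ → K = ⊤

/-- A minimal projective resolution of `M` by finitely generated projective modules:
each `P i → Ω^i M` is a projective cover (i.e. has superfluous kernel). -/
structure MinRes (R : Type u) [CommRing R] (M : Type u) [AddCommGroup M] [Module R M] where
  P : ℕ → ModuleCat.{u} R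
  projective : ∀ i, Module.Projective R (P i)
  finite : ∀ i, Module.Finite R (P i)
  d : (i : ℕ) → (↥(P (i + 1)) →ₗ[R] ↥(P i))
  ε : ↥(P 0) →ₗ[R] M
  surj : Function.Surjective ε
  exact0 : LinearMap.range (d 0) = LinearMap.ker ε
  exact : ∀ i, LinearMap.range (d (i + 1)) = LinearMap.ker (d i)
  min_eps : (LinearMap.ker ε).IsSuperfluous
  min_d : ∀ i, (LinearMap.ker (d i)).IsSuperfluous

namespace MinRes

variable {R M : Type u} [CommRing R] [AddCommGroup M] [Module R M]

/-- `T k F` is the Auslander-Bridger transpose `𝒯_{k+1} M = Tr Ω^k M`, computed as the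
cokernel of `P_k* → P_{k+1}*`. -/
def T (F : MinRes R M) (k : ℕ) : Type u :=
  (Module.Dual R ↥(F.P (k + 1))) ⧸ LinearMap.range (F.d k).dualMap

instance (F : MinRes R M) (k : ℕ) : AddCommGroup (F.T k) :=
  inferInstanceAs (AddCommGroup ((Module.Dual R ↥(F.P (k + 1))) ⧸
    LinearMap.range (F.d k).dualMap))

instance (F : MinRes R M) (k : ℕ) : Module R (F.T k) :=
  inferInstanceAs (Module R ((Module.Dual R ↥(F.P (k + 1))) ⧸
    LinearMap.range (F.d k).dualMap))

/-- The transpose `Tr M = coker(P₀* → P₁*)` computed from a minimal projective presentation. -/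
abbrev Tr (F : MinRes R M) : Type u := F.T 0

/-- `λM = ΩTr M`, realized as the image of `P₀* → P₁*` for a minimal projective
presentation `P₁ → P₀ → M → 0`. -/
def lambdaMod (F : MinRes R M) : Type u :=
  ↥(LinearMap.range (F.d 0).dualMap)

instance (F : MinRes R M) : AddCommGroup F.lambdaMod :=
  inferInstanceAs (AddCommGroup ↥(LinearMap.range (F.d 0).dualMap))

instance (F : MinRes R M) : Module R F.lambdaMod :=
  inferInstanceAs (Module R ↥(LinearMap.range (F.d 0).dualMap))

end MinRes

/-- `M` is a horizontally linked `R`-module, i.e. `M ≅ λλM`. -/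
def IsHorizontallyLinked (R : Type u) [CommRing R] (M : Type u) [AddCommGroup M]
    [Module R M] : Prop :=
  ∃ (F : MinRes R M) (G : MinRes R F.lambdaMod), Nonempty (G.lambdaMod ≃ₗ[R] M)

/-- `M` and `N` are horizontally linked to each other: `M ≅ λN` and `N ≅ λM`. -/
def MutuallyLinked (A : Type u) [CommRing A] (M N : Type u) [AddCommGroup M] [Module A M]
    [AddCommGroup N] [Module A N] : Prop :=
  ∃ (F : MinRes A M) (G : MinRes A N),
    Nonempty (F.lambdaMod ≃ₗ[A] N) ∧ Nonempty (G.lambdaMod ≃ₗ[A] M)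

/-- `M` is linked to `N` by the ideal `c`: `c` annihilates both modules and they are
horizontally linked to each other as `R ⧸ c`-modules. -/
def LinkedBy (R : Type u) [CommRing R] (c : Ideal R) (M N : Type u) [AddCommGroup M]
    [Module R M] [AddCommGroup N] [Module R N] : Prop :=
  ∃ (hM : Module.IsTorsionBySet R M c) (hN : Module.IsTorsionBySet R N c),
    letI := hM.module
    letI := hN.module
    MutuallyLinked (R ⧸ c) M N

/-- A stable module: no nonzero projective direct summand. -/
def IsStableModule (R : Type u) [CommRing R] (M : Type u) [AddCommGroup M] [Module R M] : Prop :=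
  ∀ N : Submodule R M, Module.Projective R ↥N → (∃ N' : Submodule R M, IsCompl N N') → N = ⊥

/-- `M` has G-dimension zero: `M` is finitely generated and reflexive,
and `Ext^i(M,R) = 0 = Ext^i(M*,R)` for all `i > 0`. -/
def IsGDimZero (R : Type u) [CommRing R] (M : Type u) [AddCommGroup M] [Module R M] : Prop :=
  Module.Finite R M ∧ Function.Bijective (Module.Dual.eval R M) ∧
    (∀ i : ℕ, 0 < i → Subsingleton (extM R i M R)) ∧
    (∀ i : ℕ, 0 < i → Subsingleton (extM R i (Module.Dual R M) R))

/-- `M` admits a resolution of length `≤ n` by modules of G-dimension zero. -/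
def GDimLE (R : Type u) [CommRing R] : ℕ → ModuleCat.{u} R → Prop
  | 0, M => IsGDimZero R ↥M
  | n + 1, M =>
    ∃ (G : ModuleCat.{u} R) (f : ↥G →ₗ[R] ↥M), IsGDimZero R ↥G ∧ Function.Surjective f ∧
      GDimLE R n (ModuleCat.of R ↥(LinearMap.ker f))

/-- The G-dimension of `M`: the minimal length of a resolution of `M` by modules of
G-dimension zero (`∞` if there is none). -/
def GDim (R : Type u) [CommRing R] (M : Type u) [AddCommGroup M] [Module R M] : ℕ∞ :=
  sInf {n : ℕ∞ | ∃ k : ℕ, n = k ∧ GDimLE R k (ModuleCat.of R M)}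

/-- The reduced grade of `M`: `rgr M = inf{ i > 0 | Ext^i(M,R) ≠ 0 }`. -/
def rgr (R : Type u) [CommRing R] (M : Type u) [AddCommGroup M] [Module R M] : ℕ∞ :=
  sInf {n : ℕ∞ | ∃ k : ℕ, n = k ∧ 0 < k ∧ ¬ Subsingleton (extM R k M R)}

/-- The grade of `M`: `gr M = inf{ i ≥ 0 | Ext^i(M,R) ≠ 0 }`. -/
def egrade (R : Type u) [CommRing R] (M : Type u) [AddCommGroup M] [Module R M] : ℕ∞ :=
  sInf {n : ℕ∞ | ∃ k : ℕ, n = k ∧ ¬ Subsingleton (extM R k M R)}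

/-- `depth_I(M) = inf{ i | Ext^i(R/I, M) ≠ 0 }`; for `I` the maximal ideal of a
local ring this is the depth of `M`. -/
def edepth (R : Type u) [CommRing R] (I : Ideal R) (M : Type u) [AddCommGroup M]
    [Module R M] : ℕ∞ :=
  sInf {n : ℕ∞ | ∃ k : ℕ, n = k ∧ ¬ Subsingleton (extM R k (R ⧸ I) M)}

/-- The depth of the local ring `R`. -/
def rdepth (R : Type u) [CommRing R] [IsLocalRing R] : ℕ∞ :=
  edepth R (IsLocalRing.maximalIdeal R) R

/-- `depth_{R_p}(M_p)`. -/
def locDepth (R : Type u) [CommRing R] (p : Ideal R) [p.IsPrime] (M : Type u) [AddCommGroup M]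
    [Module R M] : ℕ∞ :=
  edepth (Localization.AtPrime p) (IsLocalRing.maximalIdeal (Localization.AtPrime p))
    (LocalizedModule p.primeCompl M)

/-- `depth R_p`. -/
def locRingDepth (R : Type u) [CommRing R] (p : Ideal R) [p.IsPrime] : ℕ∞ :=
  rdepth (Localization.AtPrime p)

/-- `Gdim_{R_p}(M_p)`. -/
def locGDim (R : Type u) [CommRing R] (p : Ideal R) [p.IsPrime] (M : Type u) [AddCommGroup M]
    [Module R M] : ℕ∞ :=
  GDim (Localization.AtPrime p) (LocalizedModule p.primeCompl M)

/-- `rgr_{R_p}(M_p)`. -/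
def locRgr (R : Type u) [CommRing R] (p : Ideal R) [p.IsPrime] (M : Type u) [AddCommGroup M]
    [Module R M] : ℕ∞ :=
  rgr (Localization.AtPrime p) (LocalizedModule p.primeCompl M)

/-- `dim_{R_p}(M_p)`, the Krull dimension of the support of `M_p` over `R_p`. -/
def locDim (R : Type u) [CommRing R] (p : Ideal R) [p.IsPrime] (M : Type u) [AddCommGroup M]
    [Module R M] : WithBot ℕ∞ :=
  ringKrullDim ((Localization.AtPrime p) ⧸
    Module.annihilator (Localization.AtPrime p) (LocalizedModule p.primeCompl M))

/-- `M` satisfies the condition `S̃_k`: `depth_{R_p}(M_p) ≥ min{k, depth R_p}` for all primes. -/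
def Stilde (R : Type u) [CommRing R] (k : ℕ) (M : Type u) [AddCommGroup M] [Module R M] : Prop :=
  ∀ (p : Ideal R) (_ : p.IsPrime), min (k : ℕ∞) (locRingDepth R p) ≤ locDepth R p M

/-- `M` satisfies Serre's condition `(S_k)`:
`depth_{R_p}(M_p) ≥ min{k, dim_{R_p}(M_p)}` for all primes. -/
def SerreS (R : Type u) [CommRing R] (k : ℕ) (M : Type u) [AddCommGroup M] [Module R M] : Prop :=
  ∀ (p : Ideal R) (_ : p.IsPrime),
    min (k : WithBot ℕ∞) (locDim R p M) ≤ (locDepth R p M : WithBot ℕ∞)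

/-- `M` is a `k`-th syzygy module. -/
def IsKthSyzygy (R : Type u) [CommRing R] : ℕ → ModuleCat.{u} R → Prop
  | 0, _ => True
  | k + 1, M =>
    ∃ (P : ModuleCat.{u} R) (f : ↥M →ₗ[R] ↥P), Module.Projective R ↥P ∧ Module.Finite R ↥P ∧
      Function.Injective f ∧ IsKthSyzygy R k (ModuleCat.of R (↥P ⧸ LinearMap.range f))

/-- The `I`-torsion submodule `Γ_I(M) = { x | I^n x = 0 for some n }`. -/
def gammaTorsion (R : Type u) [CommRing R] (I : Ideal R) (M : Type u) [AddCommGroup M]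
    [Module R M] : Submodule R M where
  carrier := {x | ∃ n : ℕ, ∀ a ∈ I ^ n, a • x = 0}
  zero_mem' := ⟨0, fun a _ => smul_zero a⟩
  add_mem' := by
    rintro x y ⟨n, hn⟩ ⟨m, hm⟩
    exact ⟨n + m, fun a ha => by
      rw [smul_add, hn a (Ideal.pow_le_pow_right (Nat.le_add_right n m) ha),
        hm a (Ideal.pow_le_pow_right (Nat.le_add_left m n) ha), add_zero]⟩
  smul_mem' := by
    rintro c x ⟨n, hn⟩
    exact ⟨n, fun a ha => by rw [smul_comm, hn a ha, smul_zero]⟩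

/-- `N` has finite flat dimension (characterized by uniform vanishing of `Tor`). -/
def HasFiniteFlatDim (R : Type u) [CommRing R] (N : Type u) [AddCommGroup N] [Module R N] : Prop :=
  ∃ n : ℕ, ∀ i : ℕ, n < i → ∀ (M : ModuleCat.{u} R), Subsingleton (torM R i ↥M N)

/-- `N` has finite injective dimension (characterized by uniform vanishing of `Ext`). -/
def HasFiniteInjDim (R : Type u) [CommRing R] (N : Type u) [AddCommGroup N] [Module R N] : Prop :=
  ∃ n : ℕ, ∀ i : ℕ, n < i → ∀ (M : ModuleCat.{u} R), Subsingleton (extM R i ↥M N)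

/-- `K` is a semidualizing `R`-module. -/
def IsSemidualizing (R : Type u) [CommRing R] (K : Type u) [AddCommGroup K] [Module R K] : Prop :=
  Module.Finite R K ∧ Function.Bijective (LinearMap.lsmul R K) ∧
    ∀ i : ℕ, 0 < i → Subsingleton (extM R i K K)

/-- The biduality map `M → Hom(Hom(M,K),K)`. -/
def evalK (R : Type u) [CommRing R] (K M : Type u) [AddCommGroup K] [Module R K]
    [AddCommGroup M] [Module R M] : M →ₗ[R] ((M →ₗ[R] K) →ₗ[R] K) :=
  LinearMap.applyₗ

/-- `M` has `G_K`-dimension zero. -/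
def IsGKDimZero (R : Type u) [CommRing R] (K M : Type u) [AddCommGroup K] [Module R K]
    [AddCommGroup M] [Module R M] : Prop :=
  Module.Finite R M ∧ Function.Bijective (evalK R K M) ∧
    (∀ i : ℕ, 0 < i → Subsingleton (extM R i M K)) ∧
    (∀ i : ℕ, 0 < i → Subsingleton (extM R i (M →ₗ[R] K) K))

/-- `M` admits a resolution of length `≤ n` by modules of `G_K`-dimension zero. -/
def GKDimLE (R : Type u) [CommRing R] (K : Type u) [AddCommGroup K] [Module R K] :
    ℕ → ModuleCat.{u} R → Prop
  | 0, M => IsGKDimZero R K ↥M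
  | n + 1, M =>
    ∃ (G : ModuleCat.{u} R) (f : ↥G →ₗ[R] ↥M), IsGKDimZero R K ↥G ∧ Function.Surjective f ∧
      GKDimLE R K n (ModuleCat.of R ↥(LinearMap.ker f))

/-- The `G_K`-dimension of `M`. -/
def GKDim (R : Type u) [CommRing R] (K M : Type u) [AddCommGroup K] [Module R K]
    [AddCommGroup M] [Module R M] : ℕ∞ :=
  sInf {n : ℕ∞ | ∃ k : ℕ, n = k ∧ GKDimLE R K k (ModuleCat.of R M)}

/-- The grade of a module, `gr_R(M) = grade(Ann_R(M), R) = inf{i | Ext^i(R/Ann M, R) ≠ 0}`. -/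
def grAnn (R : Type u) [CommRing R] (M : Type u) [AddCommGroup M] [Module R M] : ℕ∞ :=
  egrade R (R ⧸ Module.annihilator R M)

/-- The grade of an ideal, `grade(I) = inf{i | Ext^i(R/I, R) ≠ 0}`. -/
def gradeI (R : Type u) [CommRing R] (I : Ideal R) : ℕ∞ :=
  egrade R (R ⧸ I)

/-- The ideal `I` is `G_K`-Gorenstein: `R/I` is `G_K`-perfect and `Ext^{gr I}(R/I, K)` is
cyclic. -/
def IsGKGorensteinIdeal (R : Type u) [CommRing R] (K : Type u) [AddCommGroup K] [Module R K]
    (I : Ideal R) : Prop :=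
  ∃ n : ℕ, grAnn R (R ⧸ I) = (n : ℕ∞) ∧ GKDim R K (R ⧸ I) = (n : ℕ∞) ∧
    ∃ x : extM R n (R ⧸ I) K, Submodule.span R {x} = ⊤

end

section P1
universe u
variable {A : Type u} [CommRing A]
variable {W X Y Z : Type u} [AddCommGroup W] [Module A W] [AddCommGroup X] [Module A X]
  [AddCommGroup Y] [Module A Y] [AddCommGroup Z] [Module A Z]

/-- Unbundled Ext. -/
abbrev EX (A : Type u) [CommRing A] (X Y : Type u) [AddCommGroup X] [Module A X]
    [AddCommGroup Y] [Module A Y] (i : ℕ) : Type u :=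
  Abelian.Ext.{u} (ModuleCat.of A X) (ModuleCat.of A Y) i

/-- Postcomposition. -/
noncomputable def EXpost (W : Type u) [AddCommGroup W] [Module A W] (f : X →ₗ[A] Y) (i : ℕ) :
    EX A W X i →ₗ[A] EX A W Y i :=
  (Abelian.Ext.bilinearCompOfLinear A (ModuleCat.of A W) (ModuleCat.of A X) (ModuleCat.of A Y)
    i 0 i (add_zero i)).flip (Abelian.Ext.mk₀ (ModuleCat.ofHom f))

theorem EXpost_apply (f : X →ₗ[A] Y) (i : ℕ) (x : EX A W X i) :
    EXpost W f i x = x.comp (Abelian.Ext.mk₀ (ModuleCat.ofHom f)) (add_zero i) := rfl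

theorem EXpost_comp (f : X →ₗ[A] Y) (g : Y →ₗ[A] Z) (i : ℕ) (x : EX A W X i) :
    EXpost W g i (EXpost W f i x) = EXpost W (g ∘ₗ f) i x := by
  simp only [EXpost_apply]
  rw [Abelian.Ext.comp_assoc_of_third_deg_zero, Abelian.Ext.mk₀_comp_mk₀]
  rfl

theorem EXpost_id (i : ℕ) (x : EX A W X i) : EXpost W (LinearMap.id : X →ₗ[A] X) i x = x := by
  rw [EXpost_apply]
  exact Abelian.Ext.comp_mk₀_id x

theorem EXpost_add (f g : X →ₗ[A] Y) (i : ℕ) (x : EX A W X i) :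
    EXpost W (f + g) i x = EXpost W f i x + EXpost W g i x := by
  simp only [EXpost_apply]
  rw [ModuleCat.ofHom_add, Abelian.Ext.mk₀_add, Abelian.Ext.comp_add]

theorem EXpost_smul (r : A) (f : X →ₗ[A] Y) (i : ℕ) (x : EX A W X i) :
    EXpost W (r • f) i x = r • EXpost W f i x := by
  simp only [EXpost_apply]
  rw [show ModuleCat.ofHom (r • f) = r • ModuleCat.ofHom f from rfl, Abelian.Ext.mk₀_smul,
    Abelian.Ext.comp_smul]

/-- linear in the map -/
noncomputable def EXpostL (W : Type u) [AddCommGroup W] [Module A W] (i : ℕ) (x : EX A W X i) :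
    (X →ₗ[A] Y) →ₗ[A] EX A W Y i where
  toFun f := EXpost W f i x
  map_add' f g := EXpost_add f g i x
  map_smul' r f := EXpost_smul r f i x

theorem EXpostL_apply (i : ℕ) (x : EX A W X i) (f : X →ₗ[A] Y) :
    EXpostL W i x f = EXpost W f i x := rfl

theorem EX_smul_eq_zero {r : A} (hr : ∀ w : W, r • w = 0) (i : ℕ) (x : EX A W X i) :
    r • x = 0 := by
  have h1 : x = (Abelian.Ext.mk₀ (𝟙 (ModuleCat.of A W))).comp x (zero_add i) :=
    (Abelian.Ext.mk₀_id_comp x).symm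
  rw [h1, ← Abelian.Ext.smul_comp, ← Abelian.Ext.mk₀_smul]
  have : r • 𝟙 (ModuleCat.of A W) = 0 := by
    ext w
    exact hr w
  rw [this, Abelian.Ext.mk₀_zero, Abelian.Ext.zero_comp]

/-- short exact complex -/
theorem SES {f : X →ₗ[A] Y} {g : Y →ₗ[A] Z} (hf : Function.Injective f)
    (hfg : Function.Exact f g) (hg : Function.Surjective g) :
    (ShortComplex.mk (ModuleCat.ofHom f) (ModuleCat.ofHom g)
      (by ext x; exact hfg.apply_apply_eq_zero x) :
      ShortComplex (ModuleCat.{u} A)).ShortExact :=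
  { exact := (ShortComplex.ShortExact.moduleCat_exact_iff_function_exact _).mpr hfg
    mono_f := (ModuleCat.mono_iff_injective _).mpr hf
    epi_g := (ModuleCat.epi_iff_surjective _).mpr hg }

section
variable {f : X →ₗ[A] Y} {g : Y →ₗ[A] Z} (hf : Function.Injective f)
    (hfg : Function.Exact f g) (hg : Function.Surjective g)
include hf hfg hg

theorem cov2 (i : ℕ) (y : EX A W Y i) (hy : EXpost W g i y = 0) : ∃ x, EXpost W f i x = y :=
  Abelian.Ext.covariant_sequence_exact₂ _ (SES hf hfg hg) y hy

theorem cov_sub_mid (i : ℕ) (h1 : Subsingleton (EX A W X i)) (h2 : Subsingleton (EX A W Z i)) :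
    Subsingleton (EX A W Y i) := by
  refine subsingleton_of_forall_eq 0 fun y => ?_
  obtain ⟨x, rfl⟩ := cov2 hf hfg hg i y (Subsingleton.elim _ _)
  rw [Subsingleton.elim x 0, map_zero]

theorem cov_inj_succ (i : ℕ) (h : Subsingleton (EX A W Z i)) :
    Function.Injective (EXpost W f (i + 1)) := by
  rw [injective_iff_map_eq_zero]
  intro x hx
  obtain ⟨z, rfl⟩ := Abelian.Ext.covariant_sequence_exact₁ _ (SES hf hfg hg) x hx rfl
  rw [show z = 0 from Subsingleton.elim (α := EX A W Z i) _ _, Abelian.Ext.zero_comp]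

theorem cov_sub_left (i : ℕ) (h1 : Subsingleton (EX A W Z i))
    (h2 : Subsingleton (EX A W Y (i + 1))) : Subsingleton (EX A W X (i + 1)) :=
  (cov_inj_succ hf hfg hg i h1).subsingleton

theorem cov_sub_right (i : ℕ) (h1 : Subsingleton (EX A W Y i))
    (h2 : Subsingleton (EX A W X (i + 1))) : Subsingleton (EX A W Z i) := by
  refine subsingleton_of_forall_eq 0 fun z => ?_
  obtain ⟨y, rfl⟩ := Abelian.Ext.covariant_sequence_exact₃ _ (SES hf hfg hg) z rfl
    (Subsingleton.elim (α := EX A W X (i + 1)) _ _)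
  rw [show y = 0 from Subsingleton.elim (α := EX A W Y i) _ _, Abelian.Ext.zero_comp]

theorem con_sub_mid (i : ℕ) (h1 : Subsingleton (EX A X W i)) (h2 : Subsingleton (EX A Z W i)) :
    Subsingleton (EX A Y W i) := by
  refine subsingleton_of_forall_eq 0 fun y => ?_
  obtain ⟨x, rfl⟩ := Abelian.Ext.contravariant_sequence_exact₂ (SES hf hfg hg) _ y
    (Subsingleton.elim (α := EX A X W i) _ _)
  rw [show x = 0 from Subsingleton.elim (α := EX A Z W i) _ _, Abelian.Ext.comp_zero]

theorem con_sub_left (i : ℕ) (h1 : Subsingleton (EX A Y W i))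
    (h2 : Subsingleton (EX A Z W (i + 1))) : Subsingleton (EX A X W i) := by
  refine subsingleton_of_forall_eq 0 fun x => ?_
  obtain ⟨y, rfl⟩ := Abelian.Ext.contravariant_sequence_exact₁ (SES hf hfg hg) _ x (add_comm 1 i)
    (Subsingleton.elim (α := EX A Z W (i + 1)) _ _)
  rw [show y = 0 from Subsingleton.elim (α := EX A Y W i) _ _, Abelian.Ext.comp_zero]

theorem con_sub_right (i : ℕ) (h1 : Subsingleton (EX A Y W (i + 1)))
    (h2 : Subsingleton (EX A X W i)) : Subsingleton (EX A Z W (i + 1)) := by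
  refine subsingleton_of_forall_eq 0 fun z => ?_
  obtain ⟨x, rfl⟩ := Abelian.Ext.contravariant_sequence_exact₃ (SES hf hfg hg) _ z
    (Subsingleton.elim (α := EX A Y W (i + 1)) _ _) (add_comm 1 i)
  rw [show x = 0 from Subsingleton.elim (α := EX A X W i) _ _, Abelian.Ext.comp_zero]

/-- If `Ext^1(Z,W)=0` every map `X → W` extends to `Y`. -/
theorem con_ext_of_sub (h1 : Subsingleton (EX A Z W 1)) (φ : X →ₗ[A] W) :
    ∃ ψ : Y →ₗ[A] W, ψ ∘ₗ f = φ := by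
  obtain ⟨y, hy⟩ := Abelian.Ext.contravariant_sequence_exact₁ (SES hf hfg hg)
    (ModuleCat.of A W) (Abelian.Ext.mk₀ (ModuleCat.ofHom φ)) (add_zero 1)
    (Subsingleton.elim (α := EX A Z W 1) _ _)
  obtain ⟨ψ, rfl⟩ := (Abelian.Ext.mk₀_bijective _ _).2 y
  rw [Abelian.Ext.mk₀_comp_mk₀] at hy
  have := (Abelian.Ext.mk₀_bijective _ _).1 hy
  exact ⟨ψ.hom, by simpa using congrArg ModuleCat.Hom.hom this⟩

theorem con_sub_of_ext (h1 : Subsingleton (EX A Y W 1))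
    (h : ∀ φ : X →ₗ[A] W, ∃ ψ : Y →ₗ[A] W, ψ ∘ₗ f = φ) : Subsingleton (EX A Z W 1) := by
  refine subsingleton_of_forall_eq 0 fun z => ?_
  obtain ⟨x, rfl⟩ := Abelian.Ext.contravariant_sequence_exact₃ (SES hf hfg hg) _ z
    (Subsingleton.elim (α := EX A Y W 1) _ _) (add_zero 1)
  obtain ⟨φ, rfl⟩ := (Abelian.Ext.mk₀_bijective _ _).2 x
  obtain ⟨ψ, hψ⟩ := h φ.hom
  have : φ = ModuleCat.ofHom f ≫ ModuleCat.ofHom ψ := by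
    ext x
    exact (LinearMap.congr_fun hψ x).symm
  rw [this, ← Abelian.Ext.mk₀_comp_mk₀]
  exact (SES hf hfg hg).extClass_comp_assoc _

end

theorem cov_inj_zero {f : X →ₗ[A] Y} (hf : Function.Injective f) :
    Function.Injective (EXpost W f 0) :=
  have : Mono (ModuleCat.ofHom f) := (ModuleCat.mono_iff_injective _).mpr hf
  Abelian.Ext.postcomp_mk₀_injective_of_mono (ModuleCat.of A W) (ModuleCat.ofHom f)

theorem EX_proj [Module.Projective A X] (i : ℕ) : Subsingleton (EX A X Y (i + 1)) :=
  have : Projective (ModuleCat.of A X) := (IsProjective.iff_projective X).mp inferInstance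
  subsingleton_of_forall_eq 0 fun x => Abelian.Ext.eq_zero_of_projective x

theorem EX_congr_right (e : X ≃ₗ[A] Y) (i : ℕ) (h : Subsingleton (EX A W X i)) :
    Subsingleton (EX A W Y i) := by
  refine subsingleton_of_forall_eq 0 fun y => ?_
  have : y = EXpost W e.toLinearMap i (EXpost W e.symm.toLinearMap i y) := by
    rw [EXpost_comp]; simp [EXpost_id]
  rw [this, Subsingleton.elim (EXpost W e.symm.toLinearMap i y) 0, map_zero]

theorem EX_congr_left (e : X ≃ₗ[A] Y) (i : ℕ) (h : Subsingleton (EX A X W i)) :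
    Subsingleton (EX A Y W i) := by
  refine subsingleton_of_forall_eq 0 fun y => ?_
  have h1 : (Abelian.Ext.mk₀ (ModuleCat.ofHom e.toLinearMap)).comp y (zero_add i) = 0 :=
    Subsingleton.elim (α := EX A X W i) _ _
  have h2 : y = (Abelian.Ext.mk₀ (ModuleCat.ofHom e.symm.toLinearMap)).comp
      ((Abelian.Ext.mk₀ (ModuleCat.ofHom e.toLinearMap)).comp y (zero_add i)) (zero_add i) := by
    rw [Abelian.Ext.mk₀_comp_mk₀_assoc, ← ModuleCat.ofHom_comp]
    simp
  rw [h2, h1, Abelian.Ext.comp_zero]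

theorem EX_zero_iff : Subsingleton (EX A W X 0) ↔ Subsingleton (W →ₗ[A] X) :=
  (Abelian.Ext.addEquiv₀.trans ModuleCat.homAddEquiv).toEquiv.subsingleton_congr

end P1

section P2
universe u
variable {A : Type u} [CommRing A]

theorem extM_iff_aux {X Y : ModuleCat.{u} A} (P : ProjectiveResolution X) (i p : ℕ)
    (hp : (ComplexShape.up ℕ).prev i = p) :
    Subsingleton (((Ext A (ModuleCat.{u} A) i).obj (Opposite.op X)).obj Y) ↔
      ∀ f : P.complex.X i ⟶ Y, P.complex.d (i + 1) i ≫ f = 0 →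
        ∃ g : P.complex.X p ⟶ Y, P.complex.d i p ≫ g = f := by
  have e := (P.isoExt (R := A) i Y).toLinearEquiv.toEquiv.subsingleton_congr
  rw [e, ← ModuleCat.isZero_iff_subsingleton, ← HomologicalComplex.exactAt_iff_isZero_homology,
    HomologicalComplex.exactAt_iff' _ p i (i + 1) hp (by simp), ShortComplex.moduleCat_exact_iff]
  rfl

theorem extM_iff {X Y : Type u} [AddCommGroup X] [Module A X] [AddCommGroup Y] [Module A Y]
    (i : ℕ) : Subsingleton (extM A i X Y) ↔ Subsingleton (EX A X Y i) := by
  obtain ⟨P⟩ : Nonempty (ProjectiveResolution (ModuleCat.of A X)) :=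
    ⟨projectiveResolution (ModuleCat.of A X)⟩
  cases i with
  | zero =>
    rw [extM, extM_iff_aux P 0 0 (by simp)]
    constructor
    · intro h
      refine subsingleton_of_forall_eq 0 fun α => ?_
      obtain ⟨φ, rfl⟩ := (Abelian.Ext.mk₀_bijective _ _).2 α
      obtain ⟨q, hq, hq0⟩ : ∃ q : P.complex.X 0 ⟶ ModuleCat.of A X, Epi q ∧
          P.complex.d (0 + 1) 0 ≫ q = 0 :=
        ⟨P.π.f 0, inferInstanceAs (Epi (P.π.f 0)), P.complex_d_comp_π_f_zero⟩
      obtain ⟨g, hg⟩ := h (q ≫ φ) (by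
        rw [← Category.assoc, hq0, Limits.zero_comp])
      rw [P.complex.shape 0 0 (by simp), Limits.zero_comp] at hg
      have : φ = 0 := by
        rw [← cancel_epi q, ← hg, Limits.comp_zero]
      rw [this, Abelian.Ext.mk₀_zero]
    · intro h f hf
      refine ⟨0, ?_⟩
      rw [Limits.comp_zero]
      have : Epi (ShortComplex.mk _ _ P.complex_d_comp_π_f_zero).g :=
        inferInstanceAs (Epi (P.π.f 0))
      have h0 : P.exact₀.desc f hf = 0 := by
        apply (Abelian.Ext.mk₀_bijective (ModuleCat.of A X) _).1
        exact Subsingleton.elim (α := EX A X Y 0) _ _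
      rw [← P.exact₀.g_desc f hf, h0, Limits.comp_zero]
  | succ n =>
    rw [extM, extM_iff_aux P (n + 1) n (by simp)]
    constructor
    · intro h
      refine subsingleton_of_forall_eq 0 fun α => ?_
      obtain ⟨f, hf, rfl⟩ := P.extMk_surjective α (n + 1 + 1) rfl
      rw [P.extMk_eq_zero_iff f _ rfl hf n rfl]
      exact h f hf
    · intro h f hf
      rw [← P.extMk_eq_zero_iff f (n + 1 + 1) rfl hf n rfl]
      exact Subsingleton.elim (α := EX A X Y (n + 1)) _ _

end P2

section P3
universe u
variable {A : Type u} [CommRing A]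
variable {W X Y Z P : Type u} [AddCommGroup W] [Module A W] [AddCommGroup X] [Module A X]
  [AddCommGroup Y] [Module A Y] [AddCommGroup Z] [Module A Z] [AddCommGroup P] [Module A P]

theorem proj_dual_basis [Module.Finite A P] [Module.Projective A P] :
    ∃ (n : ℕ) (x : Fin n → P) (φ : Fin n → (P →ₗ[A] A)),
      (LinearMap.id : P →ₗ[A] P) = ∑ j, (LinearMap.toSpanSingleton A P (x j)) ∘ₗ φ j := by
  obtain ⟨n, f, g, -, -, h⟩ := Module.Finite.exists_comp_eq_id_of_projective A P
  refine ⟨n, fun j => f (Pi.single j 1), fun j => LinearMap.proj j ∘ₗ g, ?_⟩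
  rw [← h]
  ext p
  simp only [LinearMap.comp_apply, LinearMap.sum_apply, LinearMap.toSpanSingleton_apply,
    LinearMap.proj_apply]
  conv_lhs => rw [pi_eq_sum_univ' (g p)]
  simp only [map_sum, ← map_smul]

theorem proj_eq_zero [Module.Finite A P] [Module.Projective A P] (i : ℕ) (α : EX A W P i)
    (h : ∀ f : P →ₗ[A] A, EXpost W f i α = 0) : α = 0 := by
  obtain ⟨n, x, φ, hid⟩ := proj_dual_basis (A := A) (P := P)
  rw [← EXpost_id i α, hid, ← EXpostL_apply, map_sum]
  refine Finset.sum_eq_zero fun j _ => ?_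
  rw [EXpostL_apply, ← EXpost_comp, h, map_zero]

theorem proj_lift [Module.Finite A P] [Module.Projective A P] (i : ℕ)
    (Φ : (P →ₗ[A] A) →ₗ[A] EX A W A i) :
    ∃ β : EX A W P i, ∀ f : P →ₗ[A] A, EXpost W f i β = Φ f := by
  obtain ⟨n, x, φ, hid⟩ := proj_dual_basis (A := A) (P := P)
  refine ⟨∑ j, EXpost W (LinearMap.toSpanSingleton A P (x j)) i (Φ (φ j)), fun f => ?_⟩
  have hf : f = ∑ j, f (x j) • φ j := by
    conv_lhs => rw [← LinearMap.comp_id f, hid]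
    ext p
    simp [mul_comm]
  rw [map_sum]
  conv_rhs => rw [hf]
  rw [map_sum]
  refine Finset.sum_congr rfl fun j _ => ?_
  have : f ∘ₗ LinearMap.toSpanSingleton A P (x j) = f (x j) • LinearMap.id := by
    ext; simp
  rw [EXpost_comp, this, EXpost_smul, EXpost_id, map_smul]

theorem proj_sub [Module.Finite A P] [Module.Projective A P] (i : ℕ)
    (h : Subsingleton (EX A W A i)) : Subsingleton (EX A W P i) :=
  subsingleton_of_forall_eq 0 fun α => proj_eq_zero i α fun _ => Subsingleton.elim _ _

/-- k-th syzygies -/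
def Syz (A : Type u) [CommRing A] : ℕ → ModuleCat.{u} A → Prop
  | 0, _ => True
  | k + 1, X => ∃ (P Z : ModuleCat.{u} A) (f : X →ₗ[A] P) (g : P →ₗ[A] Z),
      Module.Projective A P ∧ Module.Finite A P ∧ Function.Injective f ∧ Function.Exact f g ∧
      Function.Surjective g ∧ Syz A k Z

theorem Syz.congr {k : ℕ} (e : X ≃ₗ[A] Y) (h : Syz A k (ModuleCat.of A X)) :
    Syz A k (ModuleCat.of A Y) := by
  cases k with
  | zero => trivial
  | succ k =>
    obtain ⟨P, Z, f, g, h1, h2, h3, h4, h5, h6⟩ := h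
    refine ⟨P, Z, f ∘ₗ e.symm.toLinearMap, g, h1, h2, h3.comp e.symm.injective, ?_, h5, h6⟩
    intro y
    rw [h4 y]
    constructor
    · rintro ⟨x, rfl⟩
      exact ⟨e x, by simp⟩
    · rintro ⟨x, rfl⟩
      exact ⟨e.symm x, rfl⟩

theorem Syz.sub {k : ℕ} : ∀ {s : ℕ} {X : ModuleCat.{u} A}, Syz A k X → s ≤ k →
    (∀ i < s, Subsingleton (EX A W A i)) → ∀ i < s, Subsingleton (EX A W X i) := by
  induction k with
  | zero => intro s X _ hs _ i hi; omega
  | succ k ih =>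
    rintro s X ⟨P, Z, f, g, h1, h2, h3, h4, h5, h6⟩ hs h i hi
    have hP : Subsingleton (EX A W P i) := proj_sub i (h i hi)
    cases i with
    | zero => exact (cov_inj_zero h3).subsingleton
    | succ i =>
      exact cov_sub_left h3 h4 h5 i
        (ih (s := s - 1) h6 (by omega) (fun j hj => h j (by omega)) i (by omega)) hP

theorem finite_depth [IsNoetherianRing A] [IsLocalRing A] :
    ∃ i, ¬ Subsingleton (EX A (A ⧸ IsLocalRing.maximalIdeal A) A i) := by
  by_contra! hcon
  let S : Set (Ideal A) := {I | I ≠ ⊤ ∧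
    ∀ i, Subsingleton (EX A (A ⧸ IsLocalRing.maximalIdeal A) (A ⧸ I) i)}
  have hS : S.Nonempty := ⟨⊥, bot_ne_top, fun i =>
    EX_congr_right (Submodule.quotEquivOfEqBot (⊥ : Ideal A) rfl).symm i (hcon i)⟩
  obtain ⟨I, ⟨hI, hIE⟩, hmax⟩ := set_has_maximal_iff_noetherian.mpr ‹IsNoetherianRing A› S hS
  have h0 := EX_zero_iff.mp (hIE 0)
  rw [IsSMulRegular.subsingleton_linearMap_iff] at h0
  obtain ⟨r, hr, hreg⟩ := h0
  rw [Ideal.annihilator_quotient] at hr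
  have hle : I ≤ I ⊔ Ideal.span {r} := le_sup_left
  refine hmax (I ⊔ Ideal.span {r}) ⟨?_, fun i => ?_⟩ ?_
  · intro h
    have h1 : I ⊔ Ideal.span {r} ≤ IsLocalRing.maximalIdeal A :=
      sup_le (IsLocalRing.le_maximalIdeal hI) ((Ideal.span_singleton_le_iff_mem _).mpr hr)
    rw [h, top_le_iff] at h1
    exact (IsLocalRing.maximalIdeal.isMaximal A).ne_top h1
  · refine cov_sub_right (f := LinearMap.lsmul A (A ⧸ I) r) (g := Submodule.factor hle)
      hreg ?_ (Submodule.factor_surjective hle) i (hIE i) (hIE (i + 1))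
    intro y
    obtain ⟨a, rfl⟩ := Submodule.Quotient.mk_surjective I y
    constructor
    · intro h
      have h' : a ∈ I ⊔ Ideal.span {r} := (Submodule.Quotient.mk_eq_zero _).mp h
      obtain ⟨b, hb, c, hc, rfl⟩ := Submodule.mem_sup.mp h'
      obtain ⟨d, rfl⟩ := Ideal.mem_span_singleton'.mp hc
      refine ⟨Submodule.Quotient.mk d, ?_⟩
      rw [LinearMap.lsmul_apply, ← Submodule.Quotient.mk_smul, eq_comm, Submodule.Quotient.eq]
      simpa [mul_comm] using hb
    · rintro ⟨z, hz⟩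
      obtain ⟨d, rfl⟩ := Submodule.Quotient.mk_surjective I z
      rw [← hz, LinearMap.lsmul_apply, map_smul]
      refine (Submodule.Quotient.mk_eq_zero _).mpr (Submodule.mem_sup_right ?_)
      exact Ideal.mem_span_singleton'.mpr ⟨d, by simp [mul_comm]⟩
  · refine lt_of_le_of_ne hle fun h => ?_
    have hrI : r ∈ I := by
      rw [h]; exact Submodule.mem_sup_right (Ideal.mem_span_singleton_self r)
    apply hI
    rw [Ideal.eq_top_iff_one]
    have : r • (Submodule.Quotient.mk 1 : A ⧸ I) = r • 0 := by
      rw [smul_zero, ← Submodule.Quotient.mk_smul, Submodule.Quotient.mk_eq_zero]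
      simpa using hrI
    exact (Submodule.Quotient.mk_eq_zero _).mp (hreg this)

end P3

section P4
universe u
variable {A : Type u} [CommRing A]
variable {W X Y Z G : Type u} [AddCommGroup W] [Module A W] [AddCommGroup X] [Module A X]
  [AddCommGroup Y] [Module A Y] [AddCommGroup Z] [Module A Z] [AddCommGroup G] [Module A G]

theorem ker_exact (q : X →ₗ[A] Y) : Function.Exact (LinearMap.ker q).subtype q := by
  intro x
  constructor
  · intro h
    exact ⟨⟨x, h⟩, rfl⟩
  · rintro ⟨y, rfl⟩
    exact y.2

theorem dual_exact {f : X →ₗ[A] Y} {g : Y →ₗ[A] Z} (hfg : Function.Exact f g)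
    (hg : Function.Surjective g) : Function.Exact g.dualMap f.dualMap :=
  LinearMap.exact_lcomp_of_exact_of_surjective A hfg hg

theorem dual_surj {f : X →ₗ[A] Y} {g : Y →ₗ[A] Z} (hf : Function.Injective f)
    (hfg : Function.Exact f g) (hg : Function.Surjective g) (h : Subsingleton (EX A Z A 1)) :
    Function.Surjective f.dualMap := fun φ => con_ext_of_sub hf hfg hg h φ

theorem EX_ker (q : X →ₗ[A] Y) (hq : Function.Surjective q) [Module.Projective A X] (i : ℕ)
    (h : Subsingleton (EX A Y W (i + 2))) : Subsingleton (EX A (LinearMap.ker q) W (i + 1)) :=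
  con_sub_left (Submodule.injective_subtype _) (ker_exact q) hq (i + 1) (EX_proj i) h

theorem dual_syz [IsNoetherianRing A] (k : ℕ) : ∀ (W : Type u) [AddCommGroup W] [Module A W]
    [Module.Finite A W], (∀ i, Subsingleton (EX A W A (i + 1))) →
    Syz A k (ModuleCat.of A (Module.Dual A W)) := by
  induction k with
  | zero => intros; trivial
  | succ k ih =>
    intro W _ _ _ h
    obtain ⟨n, q, hq⟩ := Module.Finite.exists_fin' A W
    exact ⟨ModuleCat.of A (Module.Dual A (Fin n → A)),
      ModuleCat.of A (Module.Dual A (LinearMap.ker q)), q.dualMap,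
      (LinearMap.ker q).subtype.dualMap, inferInstanceAs (Module.Projective A (Module.Dual A _)),
      inferInstanceAs (Module.Finite A (Module.Dual A _)),
      LinearMap.dualMap_injective_of_surjective hq, dual_exact (ker_exact q) hq,
      dual_surj (Submodule.injective_subtype _) (ker_exact q) hq (h 0),
      ih _ fun i => EX_ker q hq i (h (i + 1))⟩

/-- G-dim zero in terms of EX. -/
structure GZ (A : Type u) [CommRing A] (G : Type u) [AddCommGroup G] [Module A G] : Prop where
  fin : Module.Finite A G
  bij : Function.Bijective (Module.Dual.eval A G)
  e1 : ∀ i, Subsingleton (EX A G A (i + 1))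
  e2 : ∀ i, Subsingleton (EX A (Module.Dual A G) A (i + 1))

theorem gz_iff : IsGDimZero A G ↔ GZ A G := by
  constructor
  · rintro ⟨h1, h2, h3, h4⟩
    exact ⟨h1, h2, fun i => (extM_iff _).mp (h3 _ i.succ_pos),
      fun i => (extM_iff _).mp (h4 _ i.succ_pos)⟩
  · rintro ⟨h1, h2, h3, h4⟩
    refine ⟨h1, h2, fun i hi => ?_, fun i hi => ?_⟩
    · obtain ⟨i, rfl⟩ := Nat.exists_eq_succ_of_ne_zero hi.ne'
      exact (extM_iff _).mpr (h3 i)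
    · obtain ⟨i, rfl⟩ := Nat.exists_eq_succ_of_ne_zero hi.ne'
      exact (extM_iff _).mpr (h4 i)

theorem GZ.syz [IsNoetherianRing A] (h : GZ A G) (k : ℕ) : Syz A k (ModuleCat.of A G) := by
  have := h.fin
  exact (dual_syz k (Module.Dual A G) h.e2).congr (LinearEquiv.ofBijective _ h.bij).symm

theorem GZ.embed [IsNoetherianRing A] (h : GZ A G) :
    ∃ (F Z : Type u) (_ : AddCommGroup F) (_ : Module A F) (_ : AddCommGroup Z) (_ : Module A Z)
      (f : G →ₗ[A] F) (g : F →ₗ[A] Z), Module.Projective A F ∧ Module.Finite A F ∧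
      Function.Injective f ∧ Function.Exact f g ∧ Function.Surjective g ∧
      Function.Surjective f.dualMap ∧ ∀ k, Syz A k (ModuleCat.of A Z) := by
  have := h.fin
  obtain ⟨n, q, hq⟩ := Module.Finite.exists_fin' A (Module.Dual A G)
  let e := LinearEquiv.ofBijective _ h.bij
  refine ⟨Module.Dual A (Fin n → A), Module.Dual A (LinearMap.ker q), inferInstance, inferInstance,
    inferInstance, inferInstance, q.dualMap ∘ₗ e.toLinearMap, (LinearMap.ker q).subtype.dualMap,
    inferInstance, inferInstance,
    (LinearMap.dualMap_injective_of_surjective hq).comp e.injective, ?_,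
    dual_surj (Submodule.injective_subtype _) (ker_exact q) hq (h.e2 0), ?_,
    fun k => dual_syz k _ fun i => EX_ker q hq i (h.e2 (i + 1))⟩
  · intro y
    rw [dual_exact (ker_exact q) hq y]
    constructor
    · rintro ⟨x, rfl⟩
      exact ⟨e.symm x, by simp⟩
    · rintro ⟨x, rfl⟩
      exact ⟨e x, rfl⟩
  · intro φ
    obtain ⟨y, rfl⟩ := hq φ
    refine ⟨Module.Dual.eval A _ y, ?_⟩
    ext g
    rfl

theorem cov_inj_of {f : X →ₗ[A] Y} {g : Y →ₗ[A] Z} (hf : Function.Injective f)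
    (hfg : Function.Exact f g) (hg : Function.Surjective g) (t : ℕ)
    (h : ∀ i < t, Subsingleton (EX A W Z i)) : Function.Injective (EXpost W f t) := by
  cases t with
  | zero => exact cov_inj_zero hf
  | succ t => exact cov_inj_succ hf hfg hg t (h t (by omega))

section
variable [IsNoetherianRing A] (hG : GZ A G) {t : ℕ} (ht : ∀ i < t, Subsingleton (EX A W A i))
include hG ht

theorem GZ.h_inj (α : EX A W G t) (h : ∀ f : G →ₗ[A] A, EXpost W f t α = 0) : α = 0 := by
  obtain ⟨F, Z, _, _, _, _, f, g, _, _, hf, hfg, hg, -, hZ⟩ := hG.embed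
  apply cov_inj_of hf hfg hg t ((hZ t).sub le_rfl ht)
  rw [map_zero]
  refine proj_eq_zero t _ fun φ => ?_
  rw [EXpost_comp]
  exact h _

theorem GZ.h_surj (Φ : (G →ₗ[A] A) →ₗ[A] EX A W A t) :
    ∃ α : EX A W G t, ∀ f : G →ₗ[A] A, EXpost W f t α = Φ f := by
  obtain ⟨F, Z, _, _, _, _, f, g, _, _, hf, hfg, hg, hs, hZ⟩ := hG.embed
  obtain ⟨F1, C, f1, g1, h1, h2, hf1, hfg1, hg1, hC0⟩ := hZ (t + 1)
  have hC : ∀ i < t, Subsingleton (EX A W C i) := Syz.sub hC0 le_rfl ht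
  obtain ⟨β, hβ⟩ := proj_lift t (Φ ∘ₗ f.dualMap)
  have : EXpost W g t β = 0 := by
    apply cov_inj_of hf1 hfg1 hg1 t hC
    rw [map_zero]
    refine proj_eq_zero t _ fun φ => ?_
    rw [EXpost_comp, EXpost_comp, hβ]
    simp only [LinearMap.comp_apply]
    convert map_zero Φ
    ext x
    show φ (f1 (g (f x))) = 0
    rw [hfg.apply_apply_eq_zero, map_zero, map_zero]
  obtain ⟨α, rfl⟩ := cov2 hf hfg hg t β this
  refine ⟨α, fun φ => ?_⟩
  obtain ⟨ψ, rfl⟩ := hs φ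
  rw [← LinearMap.comp_apply (Φ), ← hβ, EXpost_comp]
  rfl
end

end P4

section P5
universe u
variable {A : Type u} [CommRing A]

theorem GDimLE.vanish (n : ℕ) : ∀ (M : ModuleCat.{u} A), GDimLE A n M → ∀ i, n ≤ i →
    Subsingleton (EX A M A (i + 1)) := by
  induction n with
  | zero => intro M h i _; exact (gz_iff.mp h).e1 i
  | succ n ih =>
    rintro M ⟨G, f, hG, hf, hK⟩ i hi
    obtain ⟨j, rfl⟩ : ∃ j, i = j + 1 := ⟨i - 1, by omega⟩
    exact con_sub_right (Submodule.injective_subtype _) (ker_exact f) hf (j + 1)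
      ((gz_iff.mp hG).e1 _) (ih _ hK j (by omega))

theorem GDimLE.fin [IsNoetherianRing A] (n : ℕ) (M : ModuleCat.{u} A) (h : GDimLE A n M) :
    Module.Finite A M := by
  cases n with
  | zero => exact (gz_iff.mp h).fin
  | succ n =>
    obtain ⟨G, f, hG, hf, hK⟩ := h
    have := (gz_iff.mp hG).fin
    exact Module.Finite.of_surjective f hf

theorem GDimLE.drop (n : ℕ) : ∀ (M : ModuleCat.{u} A), GDimLE A (n + 1) M →
    Subsingleton (EX A M A (n + 1)) → GDimLE A n M := by
  induction n with
  | zero =>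
    intro M h h1
    have hv := GDimLE.vanish 1 M h
    obtain ⟨G, f, hG, hf, hK⟩ := h
    have hG := gz_iff.mp hG
    have hK : GZ A (LinearMap.ker f) := gz_iff.mp hK
    have hs := dual_surj (Submodule.injective_subtype _) (ker_exact f) hf h1
    have hi := LinearMap.dualMap_injective_of_surjective hf
    have he := dual_exact (ker_exact f) hf
    have hs2 := dual_surj hi he hs (hK.e2 0)
    have he2 := dual_exact he hs
    refine gz_iff.mpr ⟨?_, ⟨?_, ?_⟩, ?_, ?_⟩
    · have := hG.fin
      exact Module.Finite.of_surjective f hf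
    · rw [injective_iff_map_eq_zero]
      intro m hm
      obtain ⟨g, rfl⟩ := hf m
      obtain ⟨η, hη⟩ := (he2 (Module.Dual.eval A G g)).mp (by
        ext φ; exact LinearMap.congr_fun hm φ)
      obtain ⟨k, rfl⟩ := hK.bij.2 η
      have : (k : G) = g := by
        apply hG.bij.1
        rw [← hη]
        rfl
      rw [← this]
      exact k.2
    · intro η
      obtain ⟨ξ, rfl⟩ := hs2 η
      obtain ⟨g, rfl⟩ := hG.bij.2 ξ
      exact ⟨f g, rfl⟩
    · intro i
      cases i with
      | zero => exact h1
      | succ i => exact hv (i + 1) (by omega)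
    · intro i
      exact con_sub_left hi he hs (i + 1) (hG.e2 i) (hK.e2 (i + 1))
  | succ n ih =>
    rintro M ⟨G, f, hG, hf, hK⟩ h1
    exact ⟨G, f, hG, hf, ih _ hK (con_sub_left (Submodule.injective_subtype _) (ker_exact f) hf
      (n + 1) ((gz_iff.mp hG).e1 n) h1)⟩

section loc
variable [IsNoetherianRing A] [IsLocalRing A]

theorem exists_ne_zero_map {X E : Type u} [AddCommGroup X] [Module A X] [AddCommGroup E]
    [Module A E] [Module.Finite A X] [Nontrivial X] (e : E) (he : e ≠ 0)
    (hE : ∀ r ∈ IsLocalRing.maximalIdeal A, r • e = 0) : ∃ φ : X →ₗ[A] E, φ ≠ 0 := by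
  obtain ⟨N, hN⟩ := (eq_top_or_exists_le_coatom (⊥ : Submodule A X)).resolve_left bot_ne_top
  have : IsSimpleModule A (X ⧸ N) := isSimpleModule_iff_isCoatom.mpr hN.1
  obtain ⟨I, hI, ⟨ε⟩⟩ := isSimpleModule_iff_quot_maximal.mp ‹IsSimpleModule A (X ⧸ N)›
  obtain rfl := IsLocalRing.eq_maximalIdeal hI
  let ψ : (A ⧸ IsLocalRing.maximalIdeal A) →ₗ[A] E :=
    Submodule.liftQ _ (LinearMap.toSpanSingleton A E e) (fun r hr => by
      rw [LinearMap.mem_ker, LinearMap.toSpanSingleton_apply]; exact hE r hr)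
  refine ⟨ψ ∘ₗ ε.toLinearMap ∘ₗ N.mkQ, fun h => he ?_⟩
  obtain ⟨y, hy⟩ := ε.surjective (Submodule.Quotient.mk 1)
  obtain ⟨x, rfl⟩ := N.mkQ_surjective y
  have := LinearMap.congr_fun h x
  simp only [LinearMap.comp_apply, LinearEquiv.coe_coe, hy] at this
  have h2 : ψ (Submodule.Quotient.mk 1) = (1 : A) • e := rfl
  rw [h2, one_smul] at this
  exact this

variable {t : ℕ} (ht : ∀ i < t, Subsingleton (EX A (A ⧸ IsLocalRing.maximalIdeal A) A i))
  (hne : ¬ Subsingleton (EX A (A ⧸ IsLocalRing.maximalIdeal A) A t))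
include ht hne

theorem T3 (n : ℕ) : ∀ (M : ModuleCat.{u} A), GDimLE A (n + 1) M →
    ¬ Subsingleton (EX A M A (n + 1)) →
    ∃ j, j + n + 1 = t ∧ ¬ Subsingleton (EX A (A ⧸ IsLocalRing.maximalIdeal A) M j) := by
  induction n with
  | zero =>
    rintro M ⟨G, f, hG, hf, hK⟩ h1
    have hG := gz_iff.mp hG
    have hK : GZ A (LinearMap.ker f) := gz_iff.mp hK
    have := hK.fin
    let B := LinearMap.range (LinearMap.ker f).subtype.dualMap
    have hX : Nontrivial (Module.Dual A (LinearMap.ker f) ⧸ B) := by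
      rw [Submodule.Quotient.nontrivial_iff]
      intro hB
      apply h1
      exact con_sub_of_ext (Submodule.injective_subtype _) (ker_exact f) hf (hG.e1 0)
        (LinearMap.range_eq_top.mp hB)
    rw [not_subsingleton_iff_nontrivial] at hne
    obtain ⟨e, he⟩ := exists_ne (0 : EX A (A ⧸ IsLocalRing.maximalIdeal A) A t)
    obtain ⟨φ, hφ⟩ := exists_ne_zero_map (X := Module.Dual A (LinearMap.ker f) ⧸ B) e he
      (fun r hr => EX_smul_eq_zero (fun w => by
        obtain ⟨a, rfl⟩ := Submodule.Quotient.mk_surjective _ w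
        rw [← Submodule.Quotient.mk_smul, Submodule.Quotient.mk_eq_zero]
        exact Ideal.mul_mem_right _ _ hr) t e)
    obtain ⟨α, hα⟩ := hK.h_surj ht (φ ∘ₗ B.mkQ)
    have hα0 : α ≠ 0 := by
      rintro rfl
      apply hφ
      ext x
      rw [LinearMap.comp_apply, ← LinearMap.comp_apply (f := φ), ← hα]
      simp
    have hβ : EXpost _ (LinearMap.ker f).subtype t α = 0 := by
      refine hG.h_inj ht _ fun g => ?_
      rw [EXpost_comp, hα, LinearMap.comp_apply]
      have : B.mkQ (g ∘ₗ (LinearMap.ker f).subtype) = 0 :=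
        (Submodule.Quotient.mk_eq_zero _).mpr ⟨g, rfl⟩
      rw [this, map_zero]
    have hni : ¬ Function.Injective (EXpost (A ⧸ IsLocalRing.maximalIdeal A)
        (LinearMap.ker f).subtype t) :=
      fun h => hα0 (h (hβ.trans (map_zero _).symm))
    cases t with
    | zero => exact (hni (cov_inj_zero (Submodule.injective_subtype _))).elim
    | succ s =>
      exact ⟨s, rfl, fun h => hni (cov_inj_succ (Submodule.injective_subtype _) (ker_exact f)
        hf s h)⟩
  | succ n ih =>
    rintro M ⟨G, f, hG, hf, hK⟩ h1
    have hG := gz_iff.mp hG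
    obtain ⟨j, hj, hj2⟩ := ih _ hK fun h => h1
      (con_sub_right (Submodule.injective_subtype _) (ker_exact f) hf (n + 1) (hG.e1 _) h)
    have hGt := (hG.syz t).sub le_rfl ht
    cases j with
    | zero =>
      exfalso
      have := hGt 0 (by omega)
      exact hj2 (cov_inj_zero (Submodule.injective_subtype _)).subsingleton
    | succ j =>
      exact ⟨j, by omega, fun h => hj2 (cov_sub_left (Submodule.injective_subtype _)
        (ker_exact f) hf j h (hGt _ (by omega)))⟩

theorem T4 (n r : ℕ) (M : ModuleCat.{u} A) (h : GDimLE A n M)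
    (hr : ¬ Subsingleton (EX A M A (r + 1))) :
    ∃ j, j + (r + 1) ≤ t ∧ ¬ Subsingleton (EX A (A ⧸ IsLocalRing.maximalIdeal A) M j) := by
  induction n with
  | zero => exact (hr (GDimLE.vanish 0 M h r (by omega))).elim
  | succ n ih =>
    by_cases h1 : Subsingleton (EX A M A (n + 1))
    · exact ih (GDimLE.drop n M h h1)
    · obtain ⟨j, hj, hj2⟩ := T3 ht hne n M h h1
      refine ⟨j, ?_, hj2⟩
      have : r < n + 1 := by
        by_contra hc
        exact hr (GDimLE.vanish _ M h r (by omega))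
      omega
end loc

end P5

section P6
universe u
variable {R : Type u} [CommRing R] (S : Submonoid R)

local notation "RS" => Localization S

theorem unit_RS (s : S) : IsUnit (algebraMap R RS s) := IsLocalization.map_units _ s

/-- canonical map -/
noncomputable abbrev lmk {M : Type u} [AddCommGroup M] [Module R M] (m : M) : LocalizedModule S M :=
  LocalizedModule.mkLinearMap S M m

variable {S} in
theorem lmk_frac {M : Type u} [AddCommGroup M] [Module R M] (x : LocalizedModule S M) :
    ∃ (m : M) (s : S), algebraMap R RS s • x = lmk S m := by
  induction x using LocalizedModule.induction_on with
  | h m s =>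
    refine ⟨m, s, ?_⟩
    rw [algebraMap_smul, LocalizedModule.smul'_mk]
    exact LocalizedModule.mk_cancel s m

theorem lmap_ext {M N : Type u} [AddCommGroup M] [Module R M] [AddCommGroup N] [Module RS N]
    {φ ψ : LocalizedModule S M →ₗ[RS] N} (h : ∀ m, φ (lmk S m) = ψ (lmk S m)) : φ = ψ := by
  ext x
  obtain ⟨m, s, hs⟩ := lmk_frac x
  have := h m
  rw [← hs, map_smul, map_smul] at this
  exact (unit_RS S s).smul_left_cancel.mp this

theorem lmk_eq_zero {M : Type u} [AddCommGroup M] [Module R M] (m : M) :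
    lmk S m = 0 ↔ ∃ s : S, (s : R) • m = 0 := by
  rw [lmk, IsLocalizedModule.eq_zero_iff S]
  rfl

variable {X Y Z W : Type u} [AddCommGroup X] [Module R X] [AddCommGroup Y] [Module R Y]
  [AddCommGroup Z] [Module R Z] [AddCommGroup W] [Module R W]

theorem lmap_lmk (f : X →ₗ[R] Y) (x : X) : LocalizedModule.map S f (lmk S x) = lmk S (f x) :=
  LocalizedModule.map_mk S f x 1

theorem lmap_exact {f : X →ₗ[R] Y} {g : Y →ₗ[R] Z} (h : Function.Exact f g) :
    Function.Exact (LocalizedModule.map S f) (LocalizedModule.map S g) :=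
  LocalizedModule.map_exact S f g h

/-- iso -/
noncomputable def lequiv (e : X ≃ₗ[R] Y) : LocalizedModule S X ≃ₗ[RS] LocalizedModule S Y :=
  LinearEquiv.ofLinearMap (LocalizedModule.map S e.toLinearMap)
    (LocalizedModule.map S e.symm.toLinearMap)
    (lmap_ext S fun m => by
      rw [LinearMap.comp_apply, lmap_lmk, lmap_lmk]; simp)
    (lmap_ext S fun m => by
      rw [LinearMap.comp_apply, lmap_lmk, lmap_lmk]; simp)

theorem Syz.loc (k : ℕ) : ∀ (X : ModuleCat.{u} R), Syz R k X →
    Syz RS k (ModuleCat.of RS (LocalizedModule S X)) := by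
  induction k with
  | zero => intros; trivial
  | succ k ih =>
    rintro X ⟨P, Z, f, g, h1, h2, h3, h4, h5, h6⟩
    exact ⟨ModuleCat.of RS (LocalizedModule S P), ModuleCat.of RS (LocalizedModule S Z),
      LocalizedModule.map S f, LocalizedModule.map S g,
      inferInstanceAs (Module.Projective RS (LocalizedModule S P)),
      inferInstanceAs (Module.Finite RS (LocalizedModule S P)),
      LocalizedModule.map_injective S f h3, lmap_exact S h4,
      LocalizedModule.map_surjective S g h5, ih Z h6⟩

/-- localized functional -/
noncomputable def ldual : (X →ₗ[R] R) →ₗ[R] (LocalizedModule S X →ₗ[RS] RS) :=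
  IsLocalizedModule.mapExtendScalars S (LocalizedModule.mkLinearMap S X)
    (Algebra.linearMap R RS) RS

theorem ldual_lmk (h : X →ₗ[R] R) (x : X) : ldual S h (lmk S x) = algebraMap R RS (h x) := by
  rw [ldual, IsLocalizedModule.mapExtendScalars_apply_apply, lmk, IsLocalizedModule.map_apply]
  rfl

variable [IsNoetherianRing R]

theorem dual_lift [Module.Finite R X] (φ : LocalizedModule S X →ₗ[RS] RS) :
    ∃ (h : X →ₗ[R] R) (s : S), ldual S h = algebraMap R RS s • φ := by
  have := Module.finitePresentation_of_finite R X
  obtain ⟨h, s, hs⟩ := Module.FinitePresentation.exists_lift_of_isLocalizedModule S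
    (Algebra.linearMap R RS) (φ.restrictScalars R ∘ₗ LocalizedModule.mkLinearMap S X)
  refine ⟨h, s, lmap_ext S fun m => ?_⟩
  rw [ldual_lmk]
  refine (LinearMap.congr_fun hs m).trans ?_
  rw [LinearMap.smul_apply, LinearMap.smul_apply, algebraMap_smul]
  rfl

theorem ext_loc (i : ℕ) : ∀ (W : Type u) [AddCommGroup W] [Module R W] [Module.Finite R W],
    Subsingleton (EX R W R (i + 1)) → Subsingleton (EX RS (LocalizedModule S W) RS (i + 1)) := by
  induction i with
  | zero =>
    intro W _ _ _ h
    obtain ⟨n, q, hq⟩ := Module.Finite.exists_fin' R W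
    refine con_sub_of_ext (LocalizedModule.map_injective S _
      (LinearMap.ker q).injective_subtype) (lmap_exact S (ker_exact q))
      (LocalizedModule.map_surjective S q hq) (EX_proj 0) fun φ => ?_
    obtain ⟨h1, s, hs⟩ := dual_lift S φ
    obtain ⟨h2, rfl⟩ := con_ext_of_sub (LinearMap.ker q).injective_subtype (ker_exact q) hq h h1
    obtain ⟨v, hv⟩ := unit_RS S s
    refine ⟨(↑v⁻¹ : RS) • ldual S h2, ?_⟩
    have : φ = (↑v⁻¹ : RS) • (algebraMap R RS s • φ) := by
      rw [← hv, smul_smul, Units.inv_mul, one_smul]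
    rw [this, ← hs]
    refine lmap_ext S fun m => ?_
    rw [LinearMap.comp_apply, lmap_lmk, LinearMap.smul_apply, LinearMap.smul_apply, ldual_lmk,
      ldual_lmk]
    rfl
  | succ i ih =>
    intro W _ _ _ h
    obtain ⟨n, q, hq⟩ := Module.Finite.exists_fin' R W
    exact con_sub_right (LocalizedModule.map_injective S _
      (LinearMap.ker q).injective_subtype) (lmap_exact S (ker_exact q))
      (LocalizedModule.map_surjective S q hq) (i + 1) (EX_proj _) (ih _ (EX_ker q hq i h))

theorem dual_loc [Module.Finite R W] :
    Nonempty (LocalizedModule S (Module.Dual R W) ≃ₗ[RS] Module.Dual RS (LocalizedModule S W)) := by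
  have := Module.finitePresentation_of_finite R W
  have : IsLocalizedModule S (IsLocalizedModule.mapExtendScalars S
    (LocalizedModule.mkLinearMap S W) (Algebra.linearMap R RS) RS) := inferInstance
  exact ⟨LinearEquiv.extendScalarsOfIsLocalization S RS (IsLocalizedModule.iso S
    (IsLocalizedModule.mapExtendScalars S
    (LocalizedModule.mkLinearMap S W) (Algebra.linearMap R RS) RS))⟩

theorem GZ.loc {G : Type u} [AddCommGroup G] [Module R G] (h : GZ R G) :
    GZ RS (LocalizedModule S G) := by
  have := h.fin
  refine ⟨inferInstance, ⟨?_, ?_⟩, fun i => ext_loc S i G (h.e1 i), fun i => ?_⟩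
  · rw [injective_iff_map_eq_zero]
    intro x hx
    obtain ⟨w, s, hs⟩ := lmk_frac x
    have hw : ∀ f : G →ₗ[R] R, algebraMap R RS (f w) = 0 := fun f => by
      rw [← ldual_lmk, ← hs, map_smul]
      have : ldual S f x = 0 := LinearMap.congr_fun hx (ldual S f)
      rw [this, smul_zero]
    obtain ⟨s', hs'⟩ := Module.Finite.exists_smul_of_comp_eq_of_isLocalizedModule S
      (Algebra.linearMap R RS) (Module.Dual.eval R G w) 0 (by
        ext f; simpa using hw f)
    rw [smul_zero] at hs'
    have h0 : (s' : R) • w = 0 := by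
      apply h.bij.1
      rw [map_smul, map_zero]
      exact hs'
    have h1 := (lmk_eq_zero S w).mpr ⟨s', h0⟩
    rw [← hs] at h1
    exact (unit_RS S s).smul_eq_zero.mp h1
  · intro η
    have := Module.finitePresentation_of_finite R (Module.Dual R G)
    obtain ⟨ζ, s, hs⟩ := Module.FinitePresentation.exists_lift_of_isLocalizedModule S
      (Algebra.linearMap R RS) (η.restrictScalars R ∘ₗ ldual S)
    obtain ⟨w, rfl⟩ := h.bij.2 ζ
    obtain ⟨v, hv⟩ := unit_RS S s
    refine ⟨(↑v⁻¹ : RS) • lmk S w, ?_⟩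
    ext φ
    obtain ⟨f, s', hf⟩ := dual_lift S φ
    have h1 := LinearMap.congr_fun hs f
    have h2 : algebraMap R RS (f w) = algebraMap R RS s * η (ldual S f) := by
      refine h1.trans ?_
      rw [LinearMap.smul_apply, Submonoid.smul_def, Algebra.smul_def]
      rfl
    rw [← ldual_lmk, hf, map_smul, LinearMap.smul_apply, smul_eq_mul, smul_eq_mul,
      mul_left_comm] at h2
    have h3 := (unit_RS S s').mul_left_cancel h2
    rw [Module.Dual.eval_apply, map_smul, h3, ← hv, smul_eq_mul, Units.inv_mul_cancel_left]
  · obtain ⟨e⟩ := dual_loc S (W := G)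
    exact EX_congr_left e _ (ext_loc S i _ (h.e2 i))

end P6

section P6b
universe u
variable {A : Type u} [CommRing A] {X Y : Type u} [AddCommGroup X] [Module A X]
  [AddCommGroup Y] [Module A Y]

theorem GZ.congr (e : X ≃ₗ[A] Y) (h : GZ A X) : GZ A Y := by
  have := h.fin
  refine ⟨Module.Finite.equiv e, ?_, fun i => EX_congr_left e _ (h.e1 i),
    fun i => EX_congr_left e.dualMap.symm _ (h.e2 i)⟩
  have : (Module.Dual.eval A Y : Y → _) = e.dualMap.dualMap ∘ Module.Dual.eval A X ∘ e.symm := by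
    funext y
    ext φ
    simp
  rw [this]
  exact e.dualMap.dualMap.bijective.comp (h.bij.comp e.symm.bijective)

theorem GDimLE.congr (n : ℕ) (e : X ≃ₗ[A] Y) (h : GDimLE A n (ModuleCat.of A X)) :
    GDimLE A n (ModuleCat.of A Y) := by
  induction n generalizing X Y with
  | zero => exact gz_iff.mpr (GZ.congr e (gz_iff.mp h))
  | succ n ih =>
    obtain ⟨G, f, hG, hf, hK⟩ := h
    refine ⟨G, e.toLinearMap ∘ₗ f, hG, e.surjective.comp hf, ih (LinearEquiv.ofEq _ _ ?_) hK⟩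
    exact (LinearEquiv.ker_comp e f).symm

theorem GDimLE.loc {R : Type u} [CommRing R] [IsNoetherianRing R] (S : Submonoid R) (n : ℕ) :
    ∀ (M : ModuleCat.{u} R), GDimLE R n M →
    GDimLE (Localization S) n (ModuleCat.of (Localization S) (LocalizedModule S M)) := by
  induction n with
  | zero => intro M h; exact gz_iff.mpr (GZ.loc S (gz_iff.mp h))
  | succ n ih =>
    rintro M ⟨G, f, hG, hf, hK⟩
    refine ⟨ModuleCat.of _ (LocalizedModule S G), LocalizedModule.map S f,
      gz_iff.mpr (GZ.loc S (gz_iff.mp hG)), LocalizedModule.map_surjective S f hf, ?_⟩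
    have hi := LocalizedModule.map_injective S _ (LinearMap.ker f).injective_subtype
    have hr := (LinearMap.exact_iff.mp (lmap_exact S (ker_exact f)))
    exact GDimLE.congr n ((LinearEquiv.ofInjective _ hi).trans (LinearEquiv.ofEq _ _ hr.symm))
      (ih _ hK)

end P6b

section P7
universe u
variable {R : Type u} [CommRing R]

/-- the image of `P* → K*` -/
abbrev BB {P M : Type u} [AddCommGroup M] [Module R M] [AddCommGroup P] [Module R P]
    (π : P →ₗ[R] M) : Submodule R (Module.Dual R (LinearMap.ker π)) :=
  LinearMap.range (LinearMap.ker π).subtype.dualMap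

/-- residue field -/
abbrev kk (p : Ideal R) [p.IsPrime] : Type u :=
  Localization p.primeCompl ⧸ IsLocalRing.maximalIdeal (Localization.AtPrime p)

theorem loc_hom_ne (p : Ideal R) [p.IsPrime] {Q : Type u} [AddCommGroup Q] [Module R Q]
    (x : Q) (hx : ∀ r : R, r • x = 0 ↔ r ∈ p) :
    ¬ Subsingleton (EX (Localization p.primeCompl) (kk p) (LocalizedModule p.primeCompl Q) 0) := by
  rw [EX_zero_iff]
  intro h
  let y : LocalizedModule p.primeCompl Q := lmk p.primeCompl x
  have hy : ∀ a ∈ IsLocalRing.maximalIdeal (Localization.AtPrime p), a • y = 0 := by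
    intro a ha
    obtain ⟨⟨r, s⟩, hrs⟩ := IsLocalization.surj p.primeCompl a
    have hr : r ∈ p := by
      rw [← IsLocalization.AtPrime.to_map_mem_maximal_iff (Localization.AtPrime p) p, ← hrs]
      exact Ideal.mul_mem_right _ _ ha
    have h2 : algebraMap R (Localization p.primeCompl) s • (a • y) = 0 := by
      rw [smul_smul, mul_comm, hrs, algebraMap_smul]
      rw [← map_smul, (hx r).mpr hr, map_zero]
    exact (unit_RS p.primeCompl s).smul_eq_zero.mp h2
  let ψ : kk p →ₗ[Localization p.primeCompl] LocalizedModule p.primeCompl Q :=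
    Submodule.liftQ _ (LinearMap.toSpanSingleton _ _ y) (fun r hr => by
      rw [LinearMap.mem_ker, LinearMap.toSpanSingleton_apply]; exact hy r hr)
  have h2 : ψ (Submodule.Quotient.mk 1) = (1 : Localization p.primeCompl) • y := rfl
  rw [Subsingleton.elim ψ 0, LinearMap.zero_apply, one_smul] at h2
  obtain ⟨s, hs⟩ := (lmk_eq_zero p.primeCompl x).mp h2.symm
  exact s.2 ((hx s).mp hs)

theorem base2 (p : Ideal R) [p.IsPrime] {B Y Q : Type u} [AddCommGroup B] [Module R B]
    [AddCommGroup Y] [Module R Y] [AddCommGroup Q] [Module R Q] {f : B →ₗ[R] Y} {g : Y →ₗ[R] Q}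
    (hf : Function.Injective f) (hfg : Function.Exact f g) (hg : Function.Surjective g)
    (x : Q) (hx : ∀ r : R, r • x = 0 ↔ r ∈ p)
    (hY : Subsingleton (EX (Localization p.primeCompl) (kk p) (LocalizedModule p.primeCompl Y) 0)) :
    ¬ Subsingleton (EX (Localization p.primeCompl) (kk p)
      (LocalizedModule p.primeCompl B) 1) := fun hB =>
  loc_hom_ne p x hx (cov_sub_right (LocalizedModule.map_injective p.primeCompl _ hf)
    (lmap_exact p.primeCompl hfg) (LocalizedModule.map_surjective p.primeCompl g hg) 0 hY hB)

theorem base0 (p : Ideal R) [p.IsPrime] {Y D : Type u} [AddCommGroup Y] [Module R Y]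
    [AddCommGroup D] [Module R D] (f : Y →ₗ[R] D) (hf : Function.Injective f)
    (hD : Subsingleton (EX (Localization p.primeCompl) (kk p)
      (LocalizedModule p.primeCompl D) 0)) :
    Subsingleton (EX (Localization p.primeCompl) (kk p) (LocalizedModule p.primeCompl Y) 0) :=
  (cov_inj_zero (LocalizedModule.map_injective p.primeCompl f hf)).subsingleton

variable [IsNoetherianRing R]

theorem base3 (p : Ideal R) [p.IsPrime] (K : Type u) [AddCommGroup K] [Module R K]
    [Module.Finite R K]
    (hA : Subsingleton (EX (Localization p.primeCompl) (kk p) (Localization p.primeCompl) 0)) :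
    Subsingleton (EX (Localization p.primeCompl) (kk p)
      (LocalizedModule p.primeCompl (Module.Dual R K)) 0) := by
  obtain ⟨n, q, hq⟩ := Module.Finite.exists_fin' R K
  have := proj_sub (P := LocalizedModule p.primeCompl (Module.Dual R (Fin n → R))) 0 hA
  exact base0 p q.dualMap (LinearMap.dualMap_injective_of_surjective hq) this

theorem base1 (p : Ideal R) (hp : p.IsPrime) {K P M : Type u} [AddCommGroup K] [Module R K]
    [Module.Finite R K] [AddCommGroup P] [Module R P] [Module.Finite R P]
    [AddCommGroup M] [Module R M] {j : K →ₗ[R] P} {π : P →ₗ[R] M}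
    (hj : Function.Injective j) (hjp : Function.Exact j π) (hπ : Function.Surjective π)
    (f : K →ₗ[R] R) (hx : ∀ r : R, r • f ∈ LinearMap.range j.dualMap → r ∈ p)
    (h : Subsingleton (EX (Localization p.primeCompl) (LocalizedModule p.primeCompl M)
        (Localization p.primeCompl) 1)) : False := by
  obtain ⟨ψ, hψ⟩ := con_ext_of_sub (LocalizedModule.map_injective p.primeCompl _
    hj) (lmap_exact p.primeCompl hjp)
    (LocalizedModule.map_surjective p.primeCompl π hπ) h (ldual p.primeCompl f)
  obtain ⟨g, s, hs⟩ := dual_lift p.primeCompl ψ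
  obtain ⟨s', hs'⟩ := Module.Finite.exists_smul_of_comp_eq_of_isLocalizedModule p.primeCompl
    (Algebra.linearMap R (Localization p.primeCompl)) (g ∘ₗ j)
    ((s : R) • f) (by
      ext k
      have h1 := LinearMap.congr_fun hs (lmk p.primeCompl (j k))
      have h2 := LinearMap.congr_fun hψ (lmk p.primeCompl k)
      rw [LinearMap.comp_apply, lmap_lmk, ldual_lmk] at h2
      rw [ldual_lmk, LinearMap.smul_apply] at h1
      simp only [LinearMap.comp_apply, Algebra.linearMap_apply, LinearMap.smul_apply,
        smul_eq_mul, map_mul]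
      rw [h1, h2, smul_eq_mul])
  have hmem : ((s' : R) * s) • f ∈ LinearMap.range j.dualMap := by
    rw [mul_smul]
    refine ⟨(s' : R) • g, ?_⟩
    rw [map_smul]
    exact hs'
  rcases hp.mem_or_mem (hx _ hmem) with h | h
  · exact s'.2 h
  · exact s.2 h

theorem claim (r : ℕ) : ∀ (M P B : Type u) [AddCommGroup M] [Module R M] [AddCommGroup P]
    [Module R P] [Module.Finite R P] [Module.Projective R P] [AddCommGroup B] [Module R B]
    (π : P →ₗ[R] M) (_ : B ≃ₗ[R] BB π),
    Function.Surjective π → (∀ i < r, Subsingleton (EX R M R (i + 1))) →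
    ¬ Subsingleton (EX R M R (r + 1)) →
    ∃ (p : Ideal R) (_ : p.IsPrime),
      ¬ Subsingleton (EX (Localization p.primeCompl) (LocalizedModule p.primeCompl M)
        (Localization p.primeCompl) (r + 1)) ∧
      ((∀ i < r + 1, Subsingleton (EX (Localization p.primeCompl) (kk p)
        (Localization p.primeCompl) i)) →
        ¬ Subsingleton (EX (Localization p.primeCompl) (kk p)
          (LocalizedModule p.primeCompl B) (r + 1))) := by
  induction r with
  | zero =>
    intro M P B _ _ _ _ _ _ _ _ π e hπ _ h1
    have hnt : Nontrivial (Module.Dual R (LinearMap.ker π) ⧸ BB π) := by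
      rw [Submodule.Quotient.nontrivial_iff]
      intro hB
      apply h1
      exact con_sub_of_ext (Submodule.injective_subtype _) (ker_exact π) hπ (EX_proj 0)
        (LinearMap.range_eq_top.mp hB)
    obtain ⟨p, hp⟩ := associatedPrimes.nonempty R (Module.Dual R (LinearMap.ker π) ⧸ BB π)
    obtain ⟨hp, x, hx⟩ := isAssociatedPrime_iff.mp hp
    have hx : ∀ r : R, r • x = 0 ↔ r ∈ p := fun r => by
      rw [hx]; simp [Submodule.mem_colon_singleton]
    refine ⟨p, hp, fun h => ?_, fun hA => ?_⟩
    · obtain ⟨f, rfl⟩ := (BB π).mkQ_surjective x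
      refine base1 p hp (LinearMap.ker π).injective_subtype (ker_exact π) hπ f (fun r hr => ?_) h
      refine (hx r).mp ?_
      rw [← map_smul]; exact (Submodule.Quotient.mk_eq_zero _).mpr hr
    · refine base2 p (f := (BB π).subtype ∘ₗ e.toLinearMap) (g := (BB π).mkQ)
        ((BB π).injective_subtype.comp e.injective) ?_ (BB π).mkQ_surjective x hx
        (base3 p _ (hA 0 (by omega)))
      rw [LinearMap.exact_iff, LinearEquiv.range_comp, Submodule.ker_mkQ, Submodule.range_subtype]
  | succ r ih =>
    intro M P B _ _ _ _ _ _ _ _ π e hπ h0 h1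
    obtain ⟨n, q, hq⟩ := Module.Finite.exists_fin' R (LinearMap.ker π)
    obtain ⟨p, hp, hp1, hp2⟩ := ih (LinearMap.ker π) (Fin n → R) (BB q) q (LinearEquiv.refl _ _) hq
      (fun i hi => EX_ker π hπ i (h0 (i + 1) (by omega)))
      (fun h => h1 (con_sub_right (Submodule.injective_subtype _) (ker_exact π) hπ (r + 1)
        (EX_proj _) h))
    refine ⟨p, hp, fun h => hp1 ?_, fun hA hB => hp2 (fun i hi => hA i (by omega)) ?_⟩
    · exact con_sub_left (LocalizedModule.map_injective p.primeCompl _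
        (LinearMap.ker π).injective_subtype) (lmap_exact p.primeCompl (ker_exact π))
        (LocalizedModule.map_surjective p.primeCompl π hπ) (r + 1) (EX_proj _) h
    · have htop : BB π = ⊤ := LinearMap.range_eq_top.mpr
        (dual_surj (Submodule.injective_subtype _) (ker_exact π) hπ (h0 0 (by omega)))
      have e : B ≃ₗ[R] Module.Dual R (LinearMap.ker π) := e.trans (LinearEquiv.ofTop _ htop)
      have hB' := EX_congr_right (lequiv p.primeCompl e) _ hB
      have hex : Function.Exact q.dualMap (LinearMap.ker q).subtype.dualMap.rangeRestrict := by
        intro y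
        rw [← dual_exact (ker_exact q) hq y, ← Subtype.coe_inj]
        rfl
      have hP : Subsingleton (EX (Localization p.primeCompl) (kk p)
        (LocalizedModule p.primeCompl (Module.Dual R (Fin n → R))) (r + 1)) :=
        proj_sub _ (hA _ (by omega))
      exact cov_sub_right (LocalizedModule.map_injective p.primeCompl q.dualMap
          (LinearMap.dualMap_injective_of_surjective hq))
        (lmap_exact p.primeCompl hex)
        (LocalizedModule.map_surjective p.primeCompl _
          (LinearMap.surjective_rangeRestrict _)) (r + 1) hP hB'

end P7

section P8
universe u

theorem edepth_le {A : Type u} [CommRing A] (I : Ideal A) (X : Type u) [AddCommGroup X]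
    [Module A X] (j : ℕ) (h : ¬ Subsingleton (EX A (A ⧸ I) X j)) : edepth A I X ≤ j :=
  sInf_le ⟨j, rfl, fun h' => h ((extM_iff j).mp h')⟩

theorem le_edepth {A : Type u} [CommRing A] (I : Ideal A) (X : Type u) [AddCommGroup X]
    [Module A X] (t : ℕ) (h : ∀ i < t, Subsingleton (EX A (A ⧸ I) X i)) :
    (t : ℕ∞) ≤ edepth A I X := by
  refine le_sInf ?_
  rintro _ ⟨k, rfl, hk⟩
  rw [Nat.cast_le]
  by_contra hlt
  exact hk ((extM_iff k).mpr (h k (by omega)))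

theorem exists_depth (A : Type u) [CommRing A] [IsNoetherianRing A] [IsLocalRing A] :
    ∃ t : ℕ, rdepth A = t ∧
      (∀ i < t, Subsingleton (EX A (A ⧸ IsLocalRing.maximalIdeal A) A i)) ∧
      ¬ Subsingleton (EX A (A ⧸ IsLocalRing.maximalIdeal A) A t) := by
  classical
  have h := finite_depth (A := A)
  have h1 : ∀ i < Nat.find h, Subsingleton (EX A (A ⧸ IsLocalRing.maximalIdeal A) A i) :=
    fun i hi => not_not.mp (Nat.find_min h hi)
  exact ⟨Nat.find h, le_antisymm (edepth_le _ _ _ (Nat.find_spec h)) (le_edepth _ _ _ h1), h1,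
    Nat.find_spec h⟩

theorem GDimLE.drop_all {A : Type u} [CommRing A] [IsNoetherianRing A] (n : ℕ)
    (M : ModuleCat.{u} A) (h : GDimLE A n M)
    (hv : ∀ i, Subsingleton (EX A M A (i + 1))) : GDimLE A 0 M := by
  induction n with
  | zero => exact h
  | succ n ih => exact ih (GDimLE.drop n M h (hv n))

theorem gdim_zero_iff {A : Type u} [CommRing A] (M : Type u) [AddCommGroup M] [Module A M] :
    GDim A M = 0 ↔ GDimLE A 0 (ModuleCat.of A M) := by
  constructor
  · intro h
    have hne : {n : ℕ∞ | ∃ k : ℕ, n = k ∧ GDimLE A k (ModuleCat.of A M)}.Nonempty := by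
      by_contra hn
      rw [Set.not_nonempty_iff_eq_empty] at hn
      rw [GDim, hn, sInf_empty] at h
      exact absurd h (by simp)
    obtain ⟨k, hk, hk'⟩ := csInf_mem hne
    rw [GDim] at h
    rw [h] at hk
    have : k = 0 := by exact_mod_cast hk.symm
    rwa [this] at hk'
  · intro h
    exact le_antisymm (sInf_le ⟨0, rfl, h⟩) bot_le

theorem lambda_equiv {R M : Type u} [CommRing R] [AddCommGroup M] [Module R M] (F : MinRes R M) :
    Nonempty (F.lambdaMod ≃ₗ[R] BB F.ε) := by
  have hmem : ∀ x, F.d 0 x ∈ LinearMap.ker F.ε := fun x => F.exact0 ▸ LinearMap.mem_range_self _ x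
  let δ : F.P 1 →ₗ[R] LinearMap.ker F.ε := (F.d 0).codRestrict _ hmem
  have hδ : Function.Surjective δ := by
    rintro ⟨y, hy⟩
    rw [← F.exact0] at hy
    obtain ⟨x, rfl⟩ := hy
    exact ⟨x, rfl⟩
  have hc : (F.d 0).dualMap = δ.dualMap ∘ₗ (LinearMap.ker F.ε).subtype.dualMap := rfl
  have hr : LinearMap.range (F.d 0).dualMap = (BB F.ε).map δ.dualMap := by
    rw [hc, LinearMap.range_comp]
  exact ⟨((Submodule.equivMapOfInjective δ.dualMap
    (LinearMap.dualMap_injective_of_surjective hδ) (BB F.ε)).trans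
    (LinearEquiv.ofEq _ _ hr.symm)).symm⟩

variable {R : Type u} [CommRing R] [IsNoetherianRing R]

theorem le_locDepth (p : Ideal R) [p.IsPrime] (X : Type u) [AddCommGroup X] [Module R X]
    (h : ∀ k, Syz R k (ModuleCat.of R X)) (t : ℕ)
    (ht : ∀ i < t, Subsingleton (EX (Localization.AtPrime p) (Localization.AtPrime p ⧸
      IsLocalRing.maximalIdeal (Localization.AtPrime p)) (Localization.AtPrime p) i)) :
    (t : ℕ∞) ≤ locDepth R p X :=
  le_edepth _ _ _ (Syz.sub (Syz.loc p.primeCompl t _ (h t)) le_rfl ht)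

theorem forward (M : Type u) [AddCommGroup M] [Module R M] [Module.Finite R M]
    (F : MinRes R M) (h : GDimLE R 0 (ModuleCat.of R M)) (p : Ideal R) [p.IsPrime]
    (hp : 0 < locRingDepth R p) :
    locRingDepth R p < locDepth R p M + locDepth R p F.lambdaMod := by
  have hZ : GZ R M := gz_iff.mp h
  obtain ⟨t, h1, h2, h3⟩ := exists_depth (Localization.AtPrime p)
  have h1 : locRingDepth R p = t := h1
  have hfinP := F.finite 0
  have hproj := F.projective 0
  obtain ⟨e⟩ := lambda_equiv F
  have htop : BB F.ε = ⊤ := LinearMap.range_eq_top.mpr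
    (dual_surj (Submodule.injective_subtype _) (ker_exact F.ε) F.surj (hZ.e1 0))
  have e' : F.lambdaMod ≃ₗ[R] Module.Dual R (LinearMap.ker F.ε) :=
    e.trans (LinearEquiv.ofTop _ htop)
  have a := le_locDepth p M hZ.syz t h2
  have b := le_locDepth p F.lambdaMod (fun k => (dual_syz k (LinearMap.ker F.ε)
    (fun i => EX_ker F.ε F.surj i (hZ.e1 (i + 1)))).congr e'.symm) t h2
  rw [h1] at hp ⊢
  refine lt_of_lt_of_le ?_ (add_le_add a b)
  have : 0 < t := by exact_mod_cast hp
  exact_mod_cast (by omega : t < t + t)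

theorem backward (M : Type u) [AddCommGroup M] [Module R M]
    (F : MinRes R M) (n : ℕ) (hn : GDimLE R n (ModuleCat.of R M))
    (H : ∀ (p : Ideal R) (h : p.IsPrime), haveI := h; 0 < locRingDepth R p →
        locRingDepth R p < locDepth R p M + locDepth R p F.lambdaMod) :
    GDimLE R 0 (ModuleCat.of R M) := by
  classical
  by_cases hv : ∀ i, Subsingleton (EX R M R (i + 1))
  · exact GDimLE.drop_all n _ hn hv
  push Not at hv
  have hv' : ∃ r, ¬ Subsingleton (EX R M R (r + 1)) := by
    simpa [← not_subsingleton_iff_nontrivial] using hv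
  have hr0 : ∀ i < Nat.find hv', Subsingleton (EX R M R (i + 1)) :=
    fun i hi => not_not.mp (Nat.find_min hv' hi)
  have hr1 := Nat.find_spec hv'
  generalize Nat.find hv' = r at hr0 hr1
  exfalso
  have hfinP := F.finite 0
  have hproj := F.projective 0
  obtain ⟨e⟩ := lambda_equiv F
  obtain ⟨p, hp, hp1, hp2⟩ := claim r M (F.P 0) F.lambdaMod F.ε e F.surj hr0 hr1
  obtain ⟨t, h1, h2, h3⟩ := exists_depth (Localization.AtPrime p)
  have h1 : locRingDepth R p = t := h1
  obtain ⟨j, hj, hj'⟩ := T4 (A := Localization.AtPrime p) h2 h3 n r _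
    (GDimLE.loc p.primeCompl n _ hn) hp1
  have a : locDepth R p M ≤ j := edepth_le _ _ _ hj'
  have b : locDepth R p F.lambdaMod ≤ (r + 1 : ℕ) :=
    edepth_le _ _ _ (hp2 (fun i hi => h2 i (by omega)))
  have c := H p hp (by rw [h1]; exact_mod_cast (by omega : 0 < t))
  rw [h1] at c
  have d := lt_of_lt_of_le c (add_le_add a b)
  have : t < j + (r + 1) := by exact_mod_cast d
  omega

theorem final (M : Type u) [AddCommGroup M] [Module R M] [Module.Finite R M]
    (F : MinRes R M) (hfin : GDim R M < ⊤) :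
    GDim R M = 0 ↔ ∀ (p : Ideal R) (h : p.IsPrime), haveI := h;
      0 < locRingDepth R p →
        locRingDepth R p < locDepth R p M + locDepth R p F.lambdaMod := by
  rw [gdim_zero_iff]
  refine ⟨fun h p hp hd => forward M F h p hd, fun H => ?_⟩
  obtain ⟨_, ⟨n, -, hn⟩, -⟩ := sInf_lt_iff.mp hfin
  exact backward M F n hn H

end P8

section Statements

variable (R : Type u) [CommRing R] [IsNoetherianRing R]

theorem stmt3 (M : Type u) [AddCommGroup M] [Module R M] [Module.Finite R M]
    (F : MinRes R M) (hHL : IsHorizontallyLinked R M) (hfin : GDim R M < ⊤) :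
    GDim R M = 0 ↔ ∀ (p : Ideal R) (h : p.IsPrime), haveI := h;
      0 < locRingDepth R p →
        locRingDepth R p < locDepth R p M + locDepth R p F.lambdaMod := by
  exact final M F hfin

end Statements
end

section
/- Let M be a horizontally linked R-module of finite and positive G-dimension and set t_M = rgr(M) + rgr(λM). Then Gdim_{R_p}(M_p) = 0 for every prime p ∈ Spec R with depth R_p ≤ t_M − 1. -/
open CategoryTheory

namespace HLk
section
variable {R : Type u} [CommRing R]

def ExV (n : ℕ) (X Y : Type u) [AddCommGroup X] [Module R X] [AddCommGroup Y] [Module R Y] : Prop :=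
  Subsingleton (Abelian.Ext (ModuleCat.of R X) (ModuleCat.of R Y) n)

lemma bridge_succ (n : ℕ) (X Y : Type u) [AddCommGroup X] [Module R X] [AddCommGroup Y]
    [Module R Y] : Subsingleton (extM R (n+1) X Y) ↔ ExV (R := R) (n+1) X Y := by
  let P := ProjectiveResolution.of (ModuleCat.of R X)
  have e := (P.isoExt (R := R) (n+1) (ModuleCat.of R Y)).toLinearEquiv.toEquiv
  rw [e.subsingleton_congr, ← ModuleCat.isZero_iff_subsingleton,
    ← HomologicalComplex.exactAt_iff_isZero_homology,
    HomologicalComplex.exactAt_iff' _ n (n+1) (n+2) (by simp) (by simp),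
    ShortComplex.moduleCat_exact_iff]
  constructor
  · intro h
    refine ⟨fun a b => ?_⟩
    suffices H : ∀ a : Abelian.Ext (ModuleCat.of R X) (ModuleCat.of R Y) (n+1), a = 0 by
      rw [H a, H b]
    intro a
    obtain ⟨f, hf, rfl⟩ := P.extMk_surjective a (n+2) rfl
    rw [P.extMk_eq_zero_iff _ _ _ _ n rfl]
    exact h f hf
  · intro h f hf
    exact (P.extMk_eq_zero_iff f (n+2) rfl hf n rfl).1 (Subsingleton.elim (h := h) _ _)

lemma bridge_zero (X Y : Type u) [AddCommGroup X] [Module R X] [AddCommGroup Y]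
    [Module R Y] (h : ExV (R := R) 0 X Y) : Subsingleton (extM R 0 X Y) := by
  let P := ProjectiveResolution.of (ModuleCat.of R X)
  have e := (P.isoExt (R := R) 0 (ModuleCat.of R Y)).toLinearEquiv.toEquiv
  rw [e.subsingleton_congr, ← ModuleCat.isZero_iff_subsingleton,
    ← HomologicalComplex.exactAt_iff_isZero_homology,
    HomologicalComplex.exactAt_iff' _ 0 0 1 (by simp) (by simp),
    ShortComplex.moduleCat_exact_iff]
  intro f hf
  refine ⟨0, ?_⟩
  have h1 : P.extMk f 1 rfl hf = 0 := Subsingleton.elim (h := h) _ _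
  have h2 : (f : P.complex.X 0 ⟶ ModuleCat.of R Y) = 0 := by
    have hc := P.exact₀
    have := hc.desc f hf
    have hd := hc.g_desc f hf
    have hz : hc.desc f hf = 0 := by
      have := Subsingleton.elim (h := h) (Abelian.Ext.mk₀ (hc.desc f hf)) 0
      exact (Abelian.Ext.mk₀_eq_zero_iff _).1 this
    rw [← hd, hz]; exact Limits.comp_zero
  rw [map_zero]; exact h2.symm
end
end HLk

namespace HLk
section
variable {R : Type u} [CommRing R]
variable {A B C X Y : Type u} [AddCommGroup A] [Module R A] [AddCommGroup B] [Module R B]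
  [AddCommGroup C] [Module R C] [AddCommGroup X] [Module R X] [AddCommGroup Y] [Module R Y]

structure SES (f : A →ₗ[R] B) (g : B →ₗ[R] C) : Prop where
  inj : Function.Injective f
  ex : Function.Exact f g
  surj : Function.Surjective g

lemma SES.toShort {f : A →ₗ[R] B} {g : B →ₗ[R] C} (h : SES f g) :
    (ShortComplex.mk (ModuleCat.ofHom f) (ModuleCat.ofHom g)
      (by ext x; exact h.ex.apply_apply_eq_zero x)).ShortExact where
  exact := by
    rw [ShortComplex.ShortExact.moduleCat_exact_iff_function_exact]; exact h.ex
  mono_f := (ModuleCat.mono_iff_injective _).2 h.inj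
  epi_g := (ModuleCat.epi_iff_surjective _).2 h.surj

lemma exV_of {n : ℕ} (h : ∀ a : Abelian.Ext (ModuleCat.of R X) (ModuleCat.of R Y) n, a = 0) :
    ExV (R := R) n X Y := ⟨fun a b => by rw [h a, h b]⟩

lemma ex_mid {f : A →ₗ[R] B} {g : B →ₗ[R] C} (h : SES f g) {n : ℕ}
    (hA : ExV (R := R) n A Y) (hC : ExV (R := R) n C Y) : ExV (R := R) n B Y := by
  apply exV_of
  intro a
  obtain ⟨b, hb⟩ := Abelian.Ext.contravariant_sequence_exact₂ h.toShort (ModuleCat.of R Y) a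
    (Subsingleton.elim (h := hA) _ _)
  rw [← hb, Subsingleton.elim (h := hC) b 0]; simp

lemma ex_right {f : A →ₗ[R] B} {g : B →ₗ[R] C} (h : SES f g) {n : ℕ}
    (hA : ExV (R := R) n A Y) (hB : ExV (R := R) (n+1) B Y) : ExV (R := R) (n+1) C Y := by
  apply exV_of
  intro a
  obtain ⟨b, hb⟩ := Abelian.Ext.contravariant_sequence_exact₃ h.toShort (ModuleCat.of R Y) a
    (Subsingleton.elim (h := hB) _ _) (add_comm 1 n)
  rw [← hb, Subsingleton.elim (h := hA) b 0]; simp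

lemma ex_left {f : A →ₗ[R] B} {g : B →ₗ[R] C} (h : SES f g) {n : ℕ}
    (hB : ExV (R := R) n B Y) (hC : ExV (R := R) (n+1) C Y) : ExV (R := R) n A Y := by
  apply exV_of
  intro a
  obtain ⟨b, hb⟩ := Abelian.Ext.contravariant_sequence_exact₁ h.toShort (ModuleCat.of R Y) a
    (add_comm 1 n) (Subsingleton.elim (h := hC) _ _) 
  rw [← hb, Subsingleton.elim (h := hB) b 0]; simp

lemma ex_proj [Module.Projective R X] (n : ℕ) : ExV (R := R) (n+1) X Y := by
  have : Projective (ModuleCat.of R X) := (IsProjective.iff_projective X).1 inferInstance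
  exact Abelian.Ext.subsingleton_of_projective _ _ _

lemma ex_equiv {n : ℕ} (e : A ≃ₗ[R] B) (h : ExV (R := R) (n+1) A Y) : ExV (R := R) (n+1) B Y := by
  have : SES e.toLinearMap (0 : B →ₗ[R] PUnit.{u+1}) :=
    ⟨e.injective, fun x => ⟨fun _ => e.surjective x, fun _ => rfl⟩, fun x => ⟨0, rfl⟩⟩
  exact ex_mid this h (ex_proj n)

lemma ex_shift {f : A →ₗ[R] B} {g : B →ₗ[R] C} (h : SES f g) [Module.Projective R B] {n : ℕ} :
    ExV (R := R) (n+2) C Y ↔ ExV (R := R) (n+1) A Y :=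
  ⟨fun hC => ex_left h (ex_proj n) hC, fun hA => ex_right h hA (ex_proj (n+1))⟩

lemma ex_one_imp {f : A →ₗ[R] B} {g : B →ₗ[R] C} (h : SES f g) (hC : ExV (R := R) 1 C Y)
    (φ : A →ₗ[R] Y) : ∃ ψ : B →ₗ[R] Y, ψ ∘ₗ f = φ := by
  obtain ⟨b, hb⟩ := Abelian.Ext.contravariant_sequence_exact₁ h.toShort (ModuleCat.of R Y)
    (Abelian.Ext.mk₀ (ModuleCat.ofHom φ)) (add_comm 1 0) (Subsingleton.elim (h := hC) _ _)
  obtain ⟨ψ, rfl⟩ := (Abelian.Ext.mk₀_bijective _ _).2 b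
  refine ⟨ψ.hom, ?_⟩
  rw [Abelian.Ext.mk₀_comp_mk₀] at hb
  have := (Abelian.Ext.mk₀_bijective _ _).1 hb
  exact congrArg ModuleCat.Hom.hom this

lemma ex_one_of {f : A →ₗ[R] B} {g : B →ₗ[R] C} (h : SES f g) [Module.Projective R B]
    (H : ∀ (φ : A →ₗ[R] Y), ∃ ψ : B →ₗ[R] Y, ψ ∘ₗ f = φ) : ExV (R := R) 1 C Y := by
  apply exV_of
  intro a
  obtain ⟨b, hb⟩ := Abelian.Ext.contravariant_sequence_exact₃ h.toShort (ModuleCat.of R Y) a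
    (Subsingleton.elim (h := ex_proj (R := R) (X := B) 0) _ _) (add_comm 1 0)
  obtain ⟨φ, rfl⟩ := (Abelian.Ext.mk₀_bijective _ _).2 b
  obtain ⟨ψ, hψ⟩ := H φ.hom
  have : φ = ModuleCat.ofHom f ≫ ModuleCat.ofHom ψ := by
    ext x; exact (LinearMap.congr_fun hψ x).symm
  rw [← hb, this, ← Abelian.Ext.mk₀_comp_mk₀, 
    ShortComplex.ShortExact.extClass_comp_assoc h.toShort]

/-- maps to finite projectives extend if maps to `R` do -/
lemma extend_proj {f : A →ₗ[R] B} (H : ∀ φ : A →ₗ[R] R, ∃ ψ : B →ₗ[R] R, ψ ∘ₗ f = φ)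
    [Module.Finite R Y] [Module.Projective R Y] (φ : A →ₗ[R] Y) :
    ∃ ψ : B →ₗ[R] Y, ψ ∘ₗ f = φ := by
  obtain ⟨n, p, s, -, -, hps⟩ := Module.Finite.exists_comp_eq_id_of_projective R Y
  choose ψ hψ using fun i => H (LinearMap.proj i ∘ₗ s ∘ₗ φ)
  refine ⟨p ∘ₗ LinearMap.pi ψ, ?_⟩
  have : LinearMap.pi ψ ∘ₗ f = s ∘ₗ φ := by
    ext x i; exact LinearMap.congr_fun (hψ i) x
  rw [LinearMap.comp_assoc, this, ← LinearMap.comp_assoc, hps, LinearMap.id_comp]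

lemma ex_smul_kill {x : R} (hX : ∀ m : X, x • m = 0) {n : ℕ}
    (a : Abelian.Ext (ModuleCat.of R X) (ModuleCat.of R Y) n) : x • a = 0 := by
  have h1 : a = (Abelian.Ext.mk₀ (𝟙 (ModuleCat.of R X))).comp a (zero_add n) := by simp
  have h2 : x • 𝟙 (ModuleCat.of R X) = 0 := by ext m; exact hX m
  rw [h1, ← Abelian.Ext.smul_comp, ← Abelian.Ext.mk₀_smul, h2]; simp

lemma ex_reg_step {x : R} (hX : ∀ m : X, x • m = 0) (hY : IsSMulRegular Y x) {n : ℕ}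
    (h : ExV (R := R) n X (QuotSMulTop x Y)) : ExV (R := R) (n+1) X Y := by
  have hS := IsSMulRegular.smulShortComplex_shortExact (M := ModuleCat.of R Y) hY
  apply exV_of
  intro a
  obtain ⟨b, hb⟩ := Abelian.Ext.covariant_sequence_exact₁ (ModuleCat.of R X) hS a
    (by
      have := ex_smul_kill hX a
      rw [Abelian.Ext.smul_eq_comp_mk₀] at this
      exact this) rfl
  have hb0 : b = 0 := Subsingleton.elim (h := h) b 0
  rw [← hb, hb0]; exact Abelian.Ext.zero_comp (C := ModuleCat.{u} R) _ _ hS.extClass _ rfl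

lemma ex_reg_zero {x : R} (hX : ∀ m : X, x • m = 0) (hY : IsSMulRegular Y x)  :
    ExV (R := R) 0 X Y := by
  apply exV_of
  intro a
  obtain ⟨φ, rfl⟩ := (Abelian.Ext.mk₀_bijective _ _).2 a
  have : φ = 0 := by
    ext m
    apply hY
    show x • φ.hom m = x • 0
    rw [← map_smul, hX]; simp
  rw [this]; simp

open RingTheory.Sequence in
lemma ex_reg_seq (rs : List R) (hX : ∀ r ∈ rs, ∀ m : X, r • m = 0) (hY : IsWeaklyRegular Y rs)
    (n : ℕ) (hn : n < rs.length) : ExV (R := R) n X Y := by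
  induction rs generalizing Y n with
  | nil => simp at hn
  | cons r rs ih =>
    rw [isWeaklyRegular_cons_iff] at hY
    cases n with
    | zero => exact ex_reg_zero (hX r (by simp)) hY.1
    | succ n =>
      exact ex_reg_step (hX r (by simp)) hY.1
        (ih (fun r' h' => hX r' (by simp [h'])) hY.2 n (by simpa using hn))
end
end HLk

namespace HLk
section
open RingTheory.Sequence
variable {R : Type u} [CommRing R]
variable {A B C X Y : Type u} [AddCommGroup A] [Module R A] [AddCommGroup B] [Module R B]
  [AddCommGroup C] [Module R C] [AddCommGroup X] [Module R X] [AddCommGroup Y] [Module R Y]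

lemma SES.quot {f : A →ₗ[R] B} {g : B →ₗ[R] C} (h : SES f g) {r : R} (hC : IsSMulRegular C r) :
    SES (QuotSMulTop.map r f) (QuotSMulTop.map r g) where
  inj := by
    have h1 : Function.Exact (0 : PUnit.{u+1} →ₗ[R] A) f := 
      (LinearMap.exact_zero_iff_injective _ _).2 h.inj
    have := QuotSMulTop.map_first_exact_on_four_term_exact_of_isSMulRegular_last h1 h.ex hC
    rw [map_zero] at this
    exact (LinearMap.exact_zero_iff_injective _ _).1 this
  ex := QuotSMulTop.map_exact r h.ex h.surj
  surj := QuotSMulTop.map_surjective r h.surj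

lemma wr_left (rs : List R) (j : ℕ) {A B C : Type u} [AddCommGroup A] [Module R A]
    [AddCommGroup B] [Module R B] [AddCommGroup C] [Module R C]
    {f : A →ₗ[R] B} {g : B →ₗ[R] C} (h : SES f g)
    (hB : IsWeaklyRegular B (rs.take (j+1))) (hC : IsWeaklyRegular C (rs.take j)) :
    IsWeaklyRegular A (rs.take (j+1)) := by
  induction rs generalizing j A B C with
  | nil => simp
  | cons r rs ih =>
    rw [List.take_succ_cons, isWeaklyRegular_cons_iff] at hB ⊢
    refine ⟨hB.1.of_injective f h.inj, ?_⟩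
    cases j with
    | zero => simp
    | succ j =>
      rw [List.take_succ_cons, isWeaklyRegular_cons_iff] at hC
      exact ih j (h.quot hC.1) hB.2 hC.2

lemma wr_mid (rs : List R) {A B C : Type u} [AddCommGroup A] [Module R A]
    [AddCommGroup B] [Module R B] [AddCommGroup C] [Module R C]
    {f : A →ₗ[R] B} {g : B →ₗ[R] C} (h : SES f g)
    (hA : IsWeaklyRegular A rs) (hC : IsWeaklyRegular C rs) :
    IsWeaklyRegular B rs := by
  induction rs generalizing A B C with
  | nil => simp
  | cons r rs ih =>
    rw [isWeaklyRegular_cons_iff] at hA hC ⊢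
    exact ⟨isSMulRegular_of_range_eq_ker h.inj h.ex.linearMap_ker_eq.symm hA.1 hC.1,
      ih (h.quot hC.1) hA.2 hC.2⟩

lemma wr_proj [Module.Projective R X] {rs : List R} (h : IsWeaklyRegular R rs) :
    IsWeaklyRegular X rs :=
  ((TensorProduct.lid R X).isWeaklyRegular_congr rs).1 (h.isWeaklyRegular_rTensor (M₂ := X))

lemma wr_inj {rs : List R} {f : A →ₗ[R] B} {g : B →ₗ[R] C} (h : SES f g)
    (hC : IsWeaklyRegular C rs) (a : A) (ha : f a ∈ (Ideal.ofList rs • ⊤ : Submodule R B)) :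
    a ∈ (Ideal.ofList rs • ⊤ : Submodule R A) := by
  have h1 : Function.Exact (0 : PUnit.{u+1} →ₗ[R] A) f := 
      (LinearMap.exact_zero_iff_injective _ _).2 h.inj
  have := map_first_exact_on_four_term_right_exact_of_isSMulRegular_last h1 h.ex h.surj hC
  obtain ⟨y, hy⟩ := (this (Submodule.Quotient.mk a)).1 (by
    rw [Submodule.mapQ_apply, Submodule.Quotient.mk_eq_zero]; exact ha)
  obtain ⟨y, rfl⟩ := Submodule.Quotient.mk_surjective _ y
  rw [Submodule.mapQ_apply, LinearMap.zero_apply, Submodule.Quotient.mk_zero] at hy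
  exact (Submodule.Quotient.mk_eq_zero _).1 hy.symm

def Syz : ℕ → ModuleCat.{u} R → Prop
  | 0, _ => True
  | k + 1, M => ∃ (P C : ModuleCat.{u} R) (f : M →ₗ[R] P) (g : P →ₗ[R] C),
      SES f g ∧ Module.Finite R P ∧ Module.Projective R P ∧ Syz k C

def PD : ℕ → ModuleCat.{u} R → Prop
  | 0, X => Module.Finite R X ∧ Module.Projective R X
  | n + 1, X => ∃ (K P : ModuleCat.{u} R) (f : K →ₗ[R] P) (g : P →ₗ[R] X),
      SES f g ∧ Module.Finite R P ∧ Module.Projective R P ∧ PD n K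

lemma wr_syz {rs : List R} (h : IsWeaklyRegular R rs) (b : ℕ) (M : ModuleCat.{u} R)
    (hM : Syz b M) : IsWeaklyRegular M (rs.take b) := by
  induction b generalizing M with
  | zero => simp
  | succ b ih =>
    obtain ⟨P, C, f, g, hs, _, hP, hC⟩ := hM
    refine wr_left rs b hs (wr_proj ?_) (ih C hC)
    have := (isWeaklyRegular_append_iff R (rs.take (b+1)) (rs.drop (b+1))).1
    rw [List.take_append_drop] at this
    exact (this h).1

variable [IsLocalRing R]
open IsLocalRing

lemma mem_smul_top_of_coord [Module.Free R X] [Module.Finite R X] {I : Ideal R} {x : X}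
    (h : ∀ φ : X →ₗ[R] R, φ x ∈ I) : x ∈ (I • ⊤ : Submodule R X) := by
  let b := Module.Free.chooseBasis R X
  rw [← b.sum_repr x]
  exact Submodule.sum_mem _ fun i _ => Submodule.smul_mem_smul (h (b.coord i)) trivial

lemma coord_of_mem_smul_top {I : Ideal R} {x : X}
    (h : x ∈ (I • ⊤ : Submodule R X)) (φ : X →ₗ[R] R) : φ x ∈ I := by
  refine Submodule.smul_induction_on h (fun r hr n _ => ?_) (fun x y hx hy => ?_)
  · rw [map_smul]; exact I.mul_mem_right _ hr
  · rw [map_add]; exact I.add_mem hx hy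

lemma beta_step [Module.Finite R A] [Module.Projective R A] [Module.Finite R B]
    [Module.Projective R B] {f : A →ₗ[R] B} {g : B →ₗ[R] C} (h : SES f g) {rs : List R}
    (hC : IsWeaklyRegular C rs) (s : R) (hs : s ∉ Ideal.ofList rs)
    (hms : ∀ m ∈ maximalIdeal R, m * s ∈ Ideal.ofList rs) : Module.Projective R C := by
  have : Module.Free R A := Module.free_of_flat_of_isLocalRing
  have : Module.Free R B := Module.free_of_flat_of_isLocalRing
  have : Module.Finite R C := Module.Finite.of_surjective g h.surj
  have key : ∀ a : A, f a ∈ (maximalIdeal R • ⊤ : Submodule R B) →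
      a ∈ (maximalIdeal R • ⊤ : Submodule R A) := by
    intro a ha
    have h1 : f (s • a) ∈ (Ideal.ofList rs • ⊤ : Submodule R B) := by
      apply mem_smul_top_of_coord
      intro φ
      rw [map_smul, map_smul, smul_eq_mul, mul_comm]
      exact hms _ (coord_of_mem_smul_top ha φ)
    have h2 := wr_inj h hC _ h1
    apply mem_smul_top_of_coord
    intro φ
    by_contra hu
    have hu' : IsUnit (φ a) := by
      by_contra hh; exact hu ((mem_maximalIdeal _).2 hh)
    have h3 := coord_of_mem_smul_top h2 φ
    rw [map_smul, smul_eq_mul] at h3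
    exact hs ((Ideal.mul_unit_mem_iff_mem _ hu').1 h3)
  have hfree : Module.Free R C := by
    refine Module.free_of_lTensor_residueField_injective f g h.surj h.ex ?_
    rw [injective_iff_map_eq_zero]
    intro z hz
    obtain ⟨a, rfl⟩ := TensorProduct.mk_surjective R A (ResidueField R) residue_surjective z
    rw [TensorProduct.mk_apply, LinearMap.lTensor_tmul] at hz
    have h4 : f a ∈ (maximalIdeal R • ⊤ : Submodule R B) := by
      apply mem_smul_top_of_coord
      intro φ
      have := congrArg (TensorProduct.rid R _ ∘ φ.lTensor (ResidueField R)) hz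
      simp only [Function.comp_apply, LinearMap.lTensor_tmul, TensorProduct.rid_tmul, map_zero] at this
      rw [Algebra.smul_def, mul_one] at this
      exact (residue_eq_zero_iff _).1 this
    have h5 := key a h4
    refine Submodule.smul_induction_on h5 (fun r hr n _ => ?_) (fun x y hx hy => ?_)
    · rw [map_smul, TensorProduct.mk_apply, TensorProduct.smul_tmul']
      have : r • (1 : ResidueField R) = 0 := by
        rw [Algebra.smul_def, mul_one]; exact (residue_eq_zero_iff _).2 hr
      rw [this, TensorProduct.zero_tmul]
    · rw [map_add, hx, hy, add_zero]
  infer_instance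

lemma exists_max_seq [IsNoetherianRing R] : ∃ rs : List R, (∀ r ∈ rs, r ∈ maximalIdeal R) ∧
    IsWeaklyRegular R rs ∧ ∃ s, s ∉ Ideal.ofList rs ∧
      ∀ m ∈ maximalIdeal R, m * s ∈ Ideal.ofList rs := by
  let T : Set (Ideal R) := {I | ∃ rs : List R, (∀ r ∈ rs, r ∈ maximalIdeal R) ∧
    IsWeaklyRegular R rs ∧ I = Ideal.ofList rs}
  obtain ⟨I, ⟨rs, hrs, hw, rfl⟩, hmax⟩ := set_has_maximal_iff_noetherian.2
    (inferInstance : IsNoetherian R R) T ⟨_, [], by simp, by simp, rfl⟩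
  refine ⟨rs, hrs, hw, ?_⟩
  have hle : Ideal.ofList rs ≤ maximalIdeal R := Ideal.span_le.2 hrs
  have hns : ¬ Subsingleton ((R ⧸ maximalIdeal R) →ₗ[R] (R ⧸ Ideal.ofList rs)) := by
    rw [IsSMulRegular.subsingleton_linearMap_iff]
    rintro ⟨r, hr, hreg⟩
    rw [Ideal.annihilator_quotient] at hr
    have hmem : Ideal.ofList (rs ++ [r]) ∈ T := by
      refine ⟨rs ++ [r], ?_, ?_, rfl⟩
      · intro x hx
        rcases List.mem_append.1 hx with hx | hx
        · exact hrs x hx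
        · rw [List.mem_singleton.1 hx]; exact hr
      · rw [isWeaklyRegular_append_iff, isWeaklyRegular_singleton_iff]
        refine ⟨hw, ?_⟩
        have e : (Ideal.ofList rs • ⊤ : Submodule R R) = Ideal.ofList rs := by simp
        rw [e]; exact hreg
    apply hmax _ hmem
    refine lt_of_le_of_ne (by rw [Ideal.ofList_append]; exact le_sup_left) ?_
    intro heq
    have hr' : r ∈ Ideal.ofList rs := by
      rw [heq, Ideal.ofList_append]; exact Ideal.mem_sup_right (Ideal.subset_span (by simp))
    have h1 : (1 : R ⧸ Ideal.ofList rs) = 0 := by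
      apply hreg
      show r • (1 : R ⧸ Ideal.ofList rs) = r • 0
      rw [smul_zero, Algebra.smul_def, mul_one]
      exact Ideal.Quotient.eq_zero_iff_mem.2 hr'
    have h2 : (1 : R) ∈ Ideal.ofList rs := Ideal.Quotient.eq_zero_iff_mem.1 h1
    exact (Ideal.ne_top_iff_one _).1 (maximalIdeal.isMaximal R).ne_top (hle h2)
  rw [not_subsingleton_iff_nontrivial] at hns
  obtain ⟨φ, hφ⟩ := exists_ne (0 : (R ⧸ maximalIdeal R) →ₗ[R] (R ⧸ Ideal.ofList rs))
  obtain ⟨s, hs⟩ := Ideal.Quotient.mk_surjective (φ 1)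
  refine ⟨s, fun h => hφ ?_, fun m hm => ?_⟩
  · ext
    show φ 1 = 0
    rw [← hs]; exact Ideal.Quotient.eq_zero_iff_mem.2 h
  · apply Ideal.Quotient.eq_zero_iff_mem.1
    rw [map_mul, hs]
    have : m • φ 1 = 0 := by
      rw [← map_smul, Algebra.smul_def, mul_one]
      have : algebraMap R (R ⧸ maximalIdeal R) m = 0 := Ideal.Quotient.eq_zero_iff_mem.2 hm
      rw [this, map_zero]
    rwa [Algebra.smul_def] at this

/-- main local result -/
lemma main_local {rs : List R} (hw : IsWeaklyRegular R rs) (s : R) (hs : s ∉ Ideal.ofList rs)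
    (hms : ∀ m ∈ maximalIdeal R, m * s ∈ Ideal.ofList rs) (n a b : ℕ) (X : ModuleCat.{u} R)
    (hX : PD n X) (hE : ∀ i, 0 < i → i < a → ExV (R := R) i X R)
    (hwX : IsWeaklyRegular X (rs.take b)) (ha : 0 < a) (hd : rs.length + 1 ≤ a + b) :
    Module.Projective R X := by
  induction n generalizing a b X with
  | zero => exact hX.2
  | succ n ih =>
    obtain ⟨K, P, f, g, hS, hPf, hP, hK⟩ := hX
    have htake : IsWeaklyRegular R (rs.take (b+1)) := by
      have := (isWeaklyRegular_append_iff R (rs.take (b+1)) (rs.drop (b+1))).1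
      rw [List.take_append_drop] at this
      exact (this hw).1
    have hwK : IsWeaklyRegular K (rs.take (b+1)) := wr_left rs b hS (wr_proj htake) hwX
    have hKf : Module.Finite R K := by
      cases n with
      | zero => exact hK.1
      | succ n =>
        obtain ⟨_, P', _, g', hS', hPf', _⟩ := hK
        exact Module.Finite.of_surjective g' hS'.surj
    by_cases ha1 : a = 1
    · subst ha1
      have hKp : Module.Projective R K := ih 1 (b+1) K hK (fun i h1 h2 => by omega) hwK
        one_pos (by omega)
      rw [List.take_of_length_le (by omega)] at hwX
      exact beta_step hS hwX s hs hms
    · have hKp : Module.Projective R K := by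
        refine ih (a-1) (b+1) K hK (fun i h1 h2 => ?_) hwK (by omega) (by omega)
        obtain ⟨i, rfl⟩ : ∃ j, i = j+1 := ⟨i-1, by omega⟩
        exact (ex_shift hS).1 (hE (i+2) (by omega) (by omega))
      have h1 := ex_one_imp hS (hE 1 one_pos (by omega))
      obtain ⟨ψ, hψ⟩ := extend_proj h1 (LinearMap.id : K →ₗ[R] K)
      have hsp0 : Function.Surjective g ∧ ∃ l, l ∘ₗ f = LinearMap.id := ⟨hS.surj, ψ, hψ⟩
      have hsp : Function.Injective f ∧ ∃ l, g ∘ₗ l = LinearMap.id :=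
        (hS.ex.split_tfae'.out 1 0).mp hsp0
      obtain ⟨_, l, hl⟩ := hsp
      exact Module.Projective.of_split l g hl
end
end HLk

namespace HLk
section
variable {R : Type u} [CommRing R]
variable {A B C X Y : Type u} [AddCommGroup A] [Module R A] [AddCommGroup B] [Module R B]
  [AddCommGroup C] [Module R C] [AddCommGroup X] [Module R X] [AddCommGroup Y] [Module R Y]

lemma SES.mkQ {f : A →ₗ[R] B} (hf : Function.Injective f) :
    SES f (LinearMap.range f).mkQ :=
  ⟨hf, LinearMap.exact_map_mkQ_range f, Submodule.mkQ_surjective _⟩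

lemma SES.ker {g : B →ₗ[R] C} (hg : Function.Surjective g) :
    SES (LinearMap.ker g).subtype g :=
  ⟨Submodule.subtype_injective _, LinearMap.exact_subtype_ker_map g, hg⟩

lemma SES.congr_left {f : A →ₗ[R] B} {g : B →ₗ[R] C} (h : SES f g) (e : X ≃ₗ[R] A) :
    SES (f ∘ₗ e.toLinearMap) g :=
  ⟨h.inj.comp e.injective, fun x => by
    rw [h.ex x]
    constructor
    · rintro ⟨a, rfl⟩; exact ⟨e.symm a, by simp⟩
    · rintro ⟨a, rfl⟩; exact ⟨e a, rfl⟩, h.surj⟩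

lemma SES.congr_right {f : A →ₗ[R] B} {g : B →ₗ[R] C} (h : SES f g) (e : C ≃ₗ[R] X) :
    SES f (e.toLinearMap ∘ₗ g) :=
  ⟨h.inj, fun x => by
    rw [← h.ex x]; simp, e.surjective.comp h.surj⟩

/-- co-resolution datum -/
def Step (C : ModuleCat.{u} R → Prop) (X : ModuleCat.{u} R) : Prop :=
  Module.Finite R X ∧ (∀ n, ExV (R := R) (n+1) X R) ∧
    ∃ (P X' : ModuleCat.{u} R) (f : X →ₗ[R] P) (g : P →ₗ[R] X'),
      SES f g ∧ Module.Finite R P ∧ Module.Projective R P ∧ C X'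

def GG (G : ModuleCat.{u} R) : Prop :=
  ∃ C : ModuleCat.{u} R → Prop, C G ∧ ∀ X, C X → Step C X

lemma Step.mono {C D : ModuleCat.{u} R → Prop} (h : ∀ X, C X → D X) {X : ModuleCat.{u} R}
    (hX : Step C X) : Step D X := by
  obtain ⟨h1, h2, P, X', f, g, hs, hf, hp, hC⟩ := hX
  exact ⟨h1, h2, P, X', f, g, hs, hf, hp, h _ hC⟩

lemma GG.step {G : ModuleCat.{u} R} (h : GG G) : Step GG G := by
  obtain ⟨C, hG, hC⟩ := h
  exact (hC G hG).mono fun X hX => ⟨C, hX, hC⟩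

lemma GG.of_step {G : ModuleCat.{u} R} (h : Step GG G) : GG G :=
  ⟨fun X => Step GG X, h, fun _ hX => hX.mono fun _ hY => hY.step⟩

lemma GG.fin {G : ModuleCat.{u} R} (h : GG G) : Module.Finite R G := h.step.1
lemma GG.ex {G : ModuleCat.{u} R} (h : GG G) : ∀ n, ExV (R := R) (n+1) G R := h.step.2.1

lemma GG.iso {G H : ModuleCat.{u} R} (h : GG G) (e : H ≃ₗ[R] G) : GG H := by
  obtain ⟨h1, h2, P, X', f, g, hs, hf, hp, hC⟩ := h.step
  exact GG.of_step ⟨Module.Finite.equiv e.symm, fun n => ex_equiv e.symm (h2 n), P, X', _, g,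
    hs.congr_left e, hf, hp, hC⟩

lemma GG.of_syz [IsNoetherianRing R] {G P H : ModuleCat.{u} R} {f : G →ₗ[R] P} {g : P →ₗ[R] H}
    (h : SES f g) (hP : Module.Finite R P) (hP' : Module.Projective R P) (hH : GG H) : GG G :=
  GG.of_step ⟨Module.Finite.of_injective f h.inj, fun n => (ex_shift h).1 (hH.ex (n+1)),
    P, H, f, g, h, hP, hP', hH⟩

lemma GG.zero : GG (ModuleCat.of R PUnit.{u+1}) := by
  refine ⟨fun X => Subsingleton X, ?_, fun X hX => ?_⟩
  · show Subsingleton PUnit.{u+1}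
    infer_instance
  · change Subsingleton X at hX
    refine ⟨inferInstance, fun n => ex_proj n, X, X, LinearMap.id, 0, ⟨fun _ _ h => h, ?_, ?_⟩,
      inferInstance, inferInstance, hX⟩
    · intro x; exact ⟨fun _ => ⟨x, rfl⟩, fun _ => rfl⟩
    · intro x; exact ⟨0, Subsingleton.elim _ _⟩

lemma GG.proj [IsNoetherianRing R] {P : ModuleCat.{u} R} (hP : Module.Finite R P)
    (hP' : Module.Projective R P) : GG P :=
  GG.of_syz (f := (LinearMap.id : P →ₗ[R] P)) (g := (0 : P →ₗ[R] ModuleCat.of R PUnit.{u+1}))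
    ⟨fun _ _ h => h, fun x => ⟨fun _ => ⟨x, rfl⟩, fun _ => rfl⟩, fun x => ⟨0, rfl⟩⟩ hP hP' GG.zero

/-- horseshoe -/
lemma GG.ext {A B C : ModuleCat.{u} R} {f : A →ₗ[R] B} {g : B →ₗ[R] C} (h : SES f g)
    (hA : GG A) (hC : GG C) : GG B := by
  refine ⟨fun B => ∃ (A C : ModuleCat.{u} R) (f : A →ₗ[R] B) (g : B →ₗ[R] C), SES f g ∧
    GG A ∧ GG C, ⟨A, C, f, g, h, hA, hC⟩, ?_⟩
  clear! A B C
  rintro B ⟨A, C, f, g, h, hA, hC⟩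
  have := hA.fin
  have := hC.fin
  obtain ⟨_, _, PA, A', fA, gA, hsA, _, _, hA'⟩ := hA.step
  obtain ⟨_, _, PC, C', fC, gC, hsC, _, _, hC'⟩ := hC.step
  obtain ⟨ψ, hψ⟩ := extend_proj (ex_one_imp h (hC.ex 0)) fA
  have hψ' : ∀ a, ψ (f a) = fA a := fun a => LinearMap.congr_fun hψ a
  have hfg : ∀ a, g (f a) = 0 := h.ex.apply_apply_eq_zero
  have hA0 : ∀ a, gA (fA a) = 0 := hsA.ex.apply_apply_eq_zero
  have hC0 : ∀ a, gC (fC a) = 0 := hsC.ex.apply_apply_eq_zero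
  let F : B →ₗ[R] (PA × PC) := ψ.prod (fC ∘ₗ g)
  have hF : Function.Injective F := by
    rw [injective_iff_map_eq_zero]
    intro b hb
    have h1 : ψ b = 0 := congrArg Prod.fst hb
    have h2 : fC (g b) = 0 := congrArg Prod.snd hb
    have h3 : g b = 0 := hsC.inj (by rw [h2, map_zero])
    obtain ⟨a, rfl⟩ := (h.ex b).1 h3
    rw [hψ'] at h1
    have : a = 0 := hsA.inj (by rw [h1, map_zero])
    rw [this, map_zero]
  -- cokernel
  let Q := (PA × PC) ⧸ LinearMap.range F
  let i0 : PA →ₗ[R] Q := (LinearMap.range F).mkQ ∘ₗ LinearMap.inl R PA PC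
  have hi0 : ∀ x, gA x = 0 → i0 x = 0 := by
    intro x hx
    obtain ⟨a, rfl⟩ := (hsA.ex x).1 hx
    refine (Submodule.Quotient.mk_eq_zero _).2 ⟨f a, ?_⟩
    ext
    · exact hψ' a
    · show fC (g (f a)) = 0
      rw [hfg, map_zero]
  let sA : A' → PA := Function.surjInv hsA.surj
  have hsAi : ∀ x, gA (sA x) = x := Function.surjInv_eq hsA.surj
  have hi0' : ∀ x y, gA x = gA y → i0 x = i0 y := fun x y hxy => by
    rw [← sub_eq_zero, ← map_sub]; exact hi0 _ (by rw [map_sub, hxy, sub_self])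
  let i : A' →ₗ[R] Q :=
    { toFun := fun x => i0 (sA x)
      map_add' := fun x y => by rw [← map_add]; exact hi0' _ _ (by simp [hsAi])
      map_smul' := fun r x => by
        rw [RingHom.id_apply, ← map_smul]; exact hi0' _ _ (by simp [hsAi]) }
  have hi : ∀ x, i (gA x) = i0 x := fun x => hi0' _ _ (hsAi _)
  let p : Q →ₗ[R] C' := (LinearMap.range F).liftQ (gC ∘ₗ LinearMap.snd R PA PC) (by
    rintro _ ⟨b, rfl⟩
    exact hC0 _)
  have hses : SES i p := by
    refine ⟨?_, ?_, ?_⟩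
    · rw [injective_iff_map_eq_zero]
      intro x hx
      obtain ⟨x, rfl⟩ := hsA.surj x
      rw [hi] at hx
      obtain ⟨b, hb⟩ := (Submodule.Quotient.mk_eq_zero _).1 hx
      have h1 : ψ b = x := congrArg Prod.fst hb
      have h2 : fC (g b) = 0 := congrArg Prod.snd hb
      have h3 : g b = 0 := hsC.inj (by rw [h2, map_zero])
      obtain ⟨a, rfl⟩ := (h.ex b).1 h3
      rw [← h1, hψ', hA0]
    · intro q
      constructor
      · obtain ⟨⟨x, y⟩, rfl⟩ := Submodule.Quotient.mk_surjective _ q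
        intro hq
        change gC y = 0 at hq
        obtain ⟨c, rfl⟩ := (hsC.ex y).1 hq
        obtain ⟨b, rfl⟩ := h.surj c
        refine ⟨gA (x - ψ b), ?_⟩
        rw [hi]
        refine ((Submodule.Quotient.eq _).2 ⟨-b, ?_⟩)
        ext
        · show ψ (-b) = (x - ψ b) - x
          rw [map_neg]; abel
        · show fC (g (-b)) = 0 - fC (g b)
          simp
      · rintro ⟨x, rfl⟩
        obtain ⟨x, rfl⟩ := hsA.surj x
        rw [hi]
        show gC 0 = 0
        exact map_zero _
    · intro c
      obtain ⟨y, rfl⟩ := hsC.surj c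
      exact ⟨Submodule.Quotient.mk (0, y), rfl⟩
  have hfq : Module.Finite R (B ⧸ LinearMap.range f) :=
    Module.Finite.equiv (h.ex.linearEquivOfSurjective h.surj).symm
  refine ⟨Module.Finite.of_submodule_quotient (LinearMap.range f), fun n => ex_mid h (hA.ex n) (hC.ex n),
    ModuleCat.of R (PA × PC), ModuleCat.of R Q, F, (LinearMap.range F).mkQ, SES.mkQ hF,
    inferInstanceAs (Module.Finite R (PA × PC)), inferInstanceAs (Module.Projective R (PA × PC)),
    ModuleCat.of R A', ModuleCat.of R C', i, p, hses, hA', hC'⟩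
end
end HLk

namespace HLk
section
variable {R : Type u} [CommRing R]
variable {A B C X Y : Type u} [AddCommGroup A] [Module R A] [AddCommGroup B] [Module R B]
  [AddCommGroup C] [Module R C] [AddCommGroup X] [Module R X] [AddCommGroup Y] [Module R Y]

lemma lift_surj {g : B →ₗ[R] C} (hg : Function.Surjective g) (φ : B →ₗ[R] Y)
    (h : ∀ x, g x = 0 → φ x = 0) : ∃ ψ : C →ₗ[R] Y, ψ ∘ₗ g = φ := by
  refine ⟨(LinearMap.ker g).liftQ φ (fun x hx => h x hx) ∘ₗ
    (g.quotKerEquivOfSurjective hg).symm.toLinearMap, ?_⟩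
  ext x
  have : (g.quotKerEquivOfSurjective hg).symm (g x) = Submodule.Quotient.mk x := by
    rw [LinearEquiv.symm_apply_eq]; rfl
  show (LinearMap.ker g).liftQ φ (fun x hx => h x hx) ((g.quotKerEquivOfSurjective hg).symm (g x)) = φ x
  rw [this]; rfl

lemma dual_fin' [IsNoetherianRing R] [Module.Finite R B] : Module.Finite R (Module.Dual R B) := by
  obtain ⟨m, g, hg⟩ := Module.Finite.exists_fin' R B
  exact Module.Finite.of_injective g.dualMap (LinearMap.dualMap_injective_of_surjective hg)

lemma SES.dual {f : A →ₗ[R] B} {g : B →ₗ[R] C} (h : SES f g)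
    (hC : ∀ φ : A →ₗ[R] R, ∃ ψ : B →ₗ[R] R, ψ ∘ₗ f = φ) :
    SES g.dualMap f.dualMap := by
  refine ⟨LinearMap.dualMap_injective_of_surjective h.surj, ?_, ?_⟩
  · intro φ
    constructor
    · intro hφ
      have h1 : ∀ x, g x = 0 → φ x = 0 := by
        intro x hx
        obtain ⟨a, rfl⟩ := (h.ex x).1 hx
        exact LinearMap.congr_fun hφ a
      obtain ⟨ψ, hψ⟩ := lift_surj h.surj φ h1
      exact ⟨ψ, hψ⟩
    · rintro ⟨ψ, rfl⟩
      ext a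
      show ψ (g (f a)) = 0
      rw [h.ex.apply_apply_eq_zero, map_zero]
  · intro φ
    obtain ⟨ψ, hψ⟩ := hC φ
    exact ⟨ψ, hψ⟩

lemma eval_inj_of {f : A →ₗ[R] B} (hf : Function.Injective f) [Module.Finite R B]
    [Module.Projective R B] : Function.Injective (Module.Dual.eval R A) := by
  rw [injective_iff_map_eq_zero]
  intro a ha
  apply hf
  rw [map_zero]
  apply (Module.bijective_dual_eval R B).1
  rw [map_zero]
  ext φ
  exact LinearMap.congr_fun ha (φ ∘ₗ f)

lemma dual_proj [Module.Finite R B] [Module.Projective R B] : Module.Projective R (Module.Dual R B) := inferInstance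
lemma dual_fin [Module.Finite R B] [Module.Projective R B] : Module.Finite R (Module.Dual R B) := inferInstance

lemma eval_surj_of {f : A →ₗ[R] B} {g : B →ₗ[R] C} (h : SES f g) [Module.Finite R B]
    [Module.Projective R B] (hC : ∀ φ : A →ₗ[R] R, ∃ ψ : B →ₗ[R] R, ψ ∘ₗ f = φ)
    (he : Function.Injective (Module.Dual.eval R C)) :
    Function.Surjective (Module.Dual.eval R A) := by
  intro ξ
  obtain ⟨p, hp⟩ := (Module.bijective_dual_eval R B).2 (ξ ∘ₗ f.dualMap)
  have hp' : ∀ φ : Module.Dual R B, φ p = ξ (φ ∘ₗ f) := fun φ => LinearMap.congr_fun hp φ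
  have h0 : g p = 0 := by
    apply he
    rw [map_zero]
    ext y
    show (y ∘ₗ g) p = 0
    rw [hp', LinearMap.comp_assoc, h.ex.linearMap_comp_eq_zero, LinearMap.comp_zero, map_zero]
  obtain ⟨a, rfl⟩ := (h.ex p).1 h0
  refine ⟨a, ?_⟩
  ext φ
  obtain ⟨ψ, rfl⟩ := hC φ
  exact hp' ψ

lemma ex_one_dual {f : A →ₗ[R] B} {g : B →ₗ[R] C} (h : SES f g) [Module.Finite R B]
    [Module.Projective R B] (hC : ∀ φ : A →ₗ[R] R, ∃ ψ : B →ₗ[R] R, ψ ∘ₗ f = φ)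
    (he : Function.Surjective (Module.Dual.eval R C)) :
    ExV (R := R) 1 (Module.Dual R A) R := by
  refine ex_one_of (h.dual hC) fun φ => ?_
  obtain ⟨c, rfl⟩ := he φ
  obtain ⟨b, rfl⟩ := h.surj c
  exact ⟨Module.Dual.eval R B b, rfl⟩

lemma GG.inj {G : ModuleCat.{u} R} (h : GG G) : Function.Injective (Module.Dual.eval R G) := by
  obtain ⟨_, _, P, G', f, g, hs, hf, hp, hC⟩ := h.step
  exact eval_inj_of hs.inj

lemma GG.sur {G : ModuleCat.{u} R} (h : GG G) : Function.Surjective (Module.Dual.eval R G) := by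
  obtain ⟨_, _, P, G', f, g, hs, hf, hp, hC⟩ := h.step
  exact eval_surj_of hs (ex_one_imp hs (hC.ex 0)) hC.inj

lemma GG.dualEx (n : ℕ) {G : ModuleCat.{u} R} (h : GG G) :
    ExV (R := R) (n+1) (Module.Dual R G) R := by
  induction n generalizing G with
  | zero =>
    obtain ⟨_, _, P, G', f, g, hs, hf, hp, hC⟩ := h.step
    exact ex_one_dual hs (ex_one_imp hs (hC.ex 0)) hC.sur
  | succ n ih =>
    obtain ⟨_, _, P, G', f, g, hs, hf, hp, hC⟩ := h.step
    exact (ex_shift (hs.dual (ex_one_imp hs (hC.ex 0)))).2 (ih hC)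

lemma GG.gdim {G : ModuleCat.{u} R} (h : GG G) : IsGDimZero R G := by
  refine ⟨h.fin, ⟨h.inj, h.sur⟩, ?_, ?_⟩
  · intro i hi
    obtain ⟨i, rfl⟩ : ∃ j, i = j+1 := ⟨i-1, by omega⟩
    exact (bridge_succ i G R).2 (h.ex i)
  · intro i hi
    obtain ⟨i, rfl⟩ : ∃ j, i = j+1 := ⟨i-1, by omega⟩
    exact (bridge_succ i _ R).2 (h.dualEx i)

lemma GG.of_gdim [IsNoetherianRing R] {G : ModuleCat.{u} R} (h : IsGDimZero R G) : GG G := by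
  refine ⟨fun X => Module.Finite R X ∧ (∀ n, ExV (R := R) (n+1) X R) ∧ ∃ W : ModuleCat.{u} R,
    Module.Finite R W ∧ Function.Bijective (Module.Dual.eval R W) ∧
    (∀ n, ExV (R := R) (n+1) W R) ∧ Nonempty (X ≃ₗ[R] Module.Dual R W), ?_, ?_⟩
  · obtain ⟨h1, h2, h3, h4⟩ := h
    refine ⟨h1, fun n => (bridge_succ n _ _).1 (h3 _ n.succ_pos), ModuleCat.of R (Module.Dual R G),
      ?_, ?_, fun n => (bridge_succ n _ _).1 (h4 _ n.succ_pos), ⟨LinearEquiv.ofBijective _ h2⟩⟩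
    · exact dual_fin'
    · have : Module.IsReflexive R G := ⟨h2⟩
      exact Module.bijective_dual_eval R (Module.Dual R G)
  · rintro X ⟨hX, hXE, W, hW, hWe, hWE, ⟨e⟩⟩
    refine ⟨hX, hXE, ?_⟩
    obtain ⟨m, g, hg⟩ := Module.Finite.exists_fin' R W
    have hs := SES.ker hg
    have hext := ex_one_imp hs (hWE 0)
    have hd := hs.dual hext
    refine ⟨ModuleCat.of R (Module.Dual R (Fin m → R)),
      ModuleCat.of R (Module.Dual R (LinearMap.ker g)), _, _, hd.congr_left e, ?_, ?_, ?_, ?_, ?_⟩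
    · exact dual_fin
    · exact dual_proj
    · exact dual_fin'
    · intro n
      cases n with
      | zero => exact ex_one_dual hs hext hWe.2
      | succ n => exact (ex_shift hd).2 (ex_equiv e (hXE n))
    · refine ⟨ModuleCat.of R (LinearMap.ker g), ?_, ⟨eval_inj_of hs.inj,
        eval_surj_of hs hext hWe.1⟩, fun n => (ex_shift hs).1 (hWE (n+1)), ⟨LinearEquiv.refl _ _⟩⟩
      show Module.Finite R (LinearMap.ker g)
      infer_instance

lemma GG.syz {G : ModuleCat.{u} R} (h : GG G) (b : ℕ) : Syz b G := by
  induction b generalizing G with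
  | zero => trivial
  | succ b ih =>
    obtain ⟨_, _, P, G', f, g, hs, hf, hp, hC⟩ := h.step
    exact ⟨P, G', f, g, hs, hf, hp, ih hC⟩

lemma hull [IsNoetherianRing R] (n : ℕ) (M : ModuleCat.{u} R) (h : GDimLE R n M) :
    ∃ (X G : ModuleCat.{u} R) (f : M →ₗ[R] X) (g : X →ₗ[R] G), SES f g ∧ PD n X ∧ GG G := by
  induction n generalizing M with
  | zero =>
    obtain ⟨_, _, P, G', f, g, hs, hf, hp, hC⟩ := (GG.of_gdim h).step
    exact ⟨P, G', f, g, hs, ⟨hf, hp⟩, hC⟩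
  | succ n ih =>
    obtain ⟨G0, q, hG0, hq, hK⟩ := h
    replace hG0 := GG.of_gdim hG0
    obtain ⟨X', G', f, g, hs, hX', hG'⟩ := ih _ hK
    change LinearMap.ker q →ₗ[R] X' at f
    -- pushout
    let D : LinearMap.ker q →ₗ[R] (X' × G0) := f.prod (LinearMap.ker q).subtype
    let Y := (X' × G0) ⧸ LinearMap.range D
    let iX : X' →ₗ[R] Y := (LinearMap.range D).mkQ ∘ₗ LinearMap.inl R X' G0
    let iG : G0 →ₗ[R] Y := (LinearMap.range D).mkQ ∘ₗ LinearMap.inr R X' G0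
    have hcomm : ∀ k : LinearMap.ker q, iX (f k) = - iG k := by
      intro k
      rw [eq_neg_iff_add_eq_zero]
      refine (Submodule.Quotient.mk_eq_zero _).2 ⟨k, ?_⟩
      ext
      · show f k = f k + 0
        rw [add_zero]
      · show (k : G0) = 0 + k
        rw [zero_add]
    have hgf : ∀ k, g (f k) = 0 := hs.ex.apply_apply_eq_zero
    let pM : Y →ₗ[R] M := (LinearMap.range D).liftQ (q ∘ₗ LinearMap.snd R X' G0) (by
      rintro _ ⟨k, rfl⟩; exact k.2)
    let pG : Y →ₗ[R] G' := (LinearMap.range D).liftQ (g ∘ₗ LinearMap.fst R X' G0) (by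
      rintro _ ⟨k, rfl⟩; exact hgf k)
    have s1 : SES iX pM := by
      refine ⟨?_, ?_, ?_⟩
      · rw [injective_iff_map_eq_zero]
        intro x hx
        obtain ⟨k, hk⟩ := (Submodule.Quotient.mk_eq_zero _).1 hx
        have h1 : f k = x := congrArg Prod.fst hk
        have h2 : (k : G0) = 0 := congrArg Prod.snd hk
        have h3 : k = 0 := Subtype.ext h2
        rw [← h1, h3]; exact map_zero _
      · intro y
        constructor
        · obtain ⟨⟨x, z⟩, rfl⟩ := Submodule.Quotient.mk_surjective _ y
          intro hy
          change q z = 0 at hy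
          refine ⟨x - f ⟨z, hy⟩, (Submodule.Quotient.eq _).2 ⟨-⟨z, hy⟩, ?_⟩⟩
          ext
          · show f _ = x - f _ - x
            rw [map_neg]; abel
          · show -z = 0 - z
            simp
        · rintro ⟨x, rfl⟩
          show q 0 = 0
          exact map_zero _
      · intro m
        obtain ⟨z, rfl⟩ := hq m
        exact ⟨Submodule.Quotient.mk (0, z), rfl⟩
    have s2 : SES iG pG := by
      refine ⟨?_, ?_, ?_⟩
      · rw [injective_iff_map_eq_zero]
        intro x hx
        obtain ⟨k, hk⟩ := (Submodule.Quotient.mk_eq_zero _).1 hx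
        have h1 : f k = 0 := congrArg Prod.fst hk
        have h2 : (k : G0) = x := congrArg Prod.snd hk
        have h3 : k = 0 := hs.inj (by rw [h1]; exact (map_zero _).symm)
        rw [← h2, h3]; rfl
      · intro y
        constructor
        · obtain ⟨⟨x, z⟩, rfl⟩ := Submodule.Quotient.mk_surjective _ y
          intro hy
          change g x = 0 at hy
          obtain ⟨k, rfl⟩ := (hs.ex x).1 hy
          change LinearMap.ker q at k
          refine ⟨z - k, (Submodule.Quotient.eq _).2 ⟨-k, ?_⟩⟩
          ext
          · show f (-k) = 0 - f k
            rw [map_neg]; abel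
          · show -(k : G0) = z - k - z
            abel
        · rintro ⟨x, rfl⟩
          show g 0 = 0
          exact map_zero _
      · intro m
        obtain ⟨z, rfl⟩ := hs.surj m
        exact ⟨Submodule.Quotient.mk (z, 0), rfl⟩
    have hY : GG (ModuleCat.of R Y) :=
      GG.ext (A := G0) (B := ModuleCat.of R Y) (C := G') s2 hG0 hG'
    obtain ⟨_, _, P, G'', j, r, hsj, hf, hp, hC⟩ := hY.step
    change Y →ₗ[R] P at j
    let jX : X' →ₗ[R] P := j ∘ₗ iX
    have hjX : Function.Injective jX := hsj.inj.comp s1.inj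
    let sM := Function.surjInv s1.surj
    have hsM : ∀ x, pM (sM x) = x := Function.surjInv_eq s1.surj
    let π := (LinearMap.range jX).mkQ
    have hπ : ∀ y, pM y = 0 → π (j y) = 0 := by
      intro y hy
      obtain ⟨x, rfl⟩ := (s1.ex y).1 hy
      exact (Submodule.Quotient.mk_eq_zero _).2 ⟨x, rfl⟩
    have hπ' : ∀ x y, pM x = pM y → π (j x) = π (j y) := fun x y hxy => by
      rw [← sub_eq_zero, ← map_sub, ← map_sub]; exact hπ _ (by rw [map_sub, hxy, sub_self])
    let u : M →ₗ[R] (P ⧸ LinearMap.range jX) :=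
      { toFun := fun x => π (j (sM x))
        map_add' := fun x y => by
          rw [← map_add, ← map_add]; exact hπ' _ _ (by simp [hsM])
        map_smul' := fun r x => by
          rw [RingHom.id_apply, ← map_smul, ← map_smul]; exact hπ' _ _ (by simp [hsM]) }
    have hu : ∀ y, u (pM y) = π (j y) := fun y => hπ' _ _ (hsM _)
    have hrj : ∀ y, r (j y) = 0 := hsj.ex.apply_apply_eq_zero
    let v : (P ⧸ LinearMap.range jX) →ₗ[R] G'' := (LinearMap.range jX).liftQ r (by
      rintro _ ⟨x, rfl⟩; exact hrj _)
    refine ⟨ModuleCat.of R (P ⧸ LinearMap.range jX), G'', u, v, ⟨?_, ?_, ?_⟩,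
      ⟨X', P, jX, π, SES.mkQ hjX, hf, hp, hX'⟩, hC⟩
    · rw [injective_iff_map_eq_zero]
      intro m hm
      obtain ⟨y, rfl⟩ := s1.surj m
      rw [hu] at hm
      obtain ⟨x, hx⟩ := (Submodule.Quotient.mk_eq_zero _).1 hm
      rw [← hsj.inj hx]
      exact s1.ex.apply_apply_eq_zero x
    · intro z
      constructor
      · obtain ⟨z, rfl⟩ := Submodule.Quotient.mk_surjective _ z
        intro hz
        change r z = 0 at hz
        obtain ⟨y, rfl⟩ := (hsj.ex z).1 hz
        exact ⟨pM y, hu y⟩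
      · rintro ⟨m, rfl⟩
        obtain ⟨y, rfl⟩ := s1.surj m
        rw [hu]
        exact hrj y
    · intro z
      obtain ⟨p, rfl⟩ := hsj.surj z
      exact ⟨Submodule.Quotient.mk p, rfl⟩
end
end HLk

namespace HLk
section
variable {R : Type u} [CommRing R] (S : Submonoid R)
variable {A B C X Y : Type u} [AddCommGroup A] [Module R A] [AddCommGroup B] [Module R B]
  [AddCommGroup C] [Module R C] [AddCommGroup X] [Module R X] [AddCommGroup Y] [Module R Y]

lemma SES.loc {f : A →ₗ[R] B} {g : B →ₗ[R] C} (h : SES f g) :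
    SES (LocalizedModule.map S f) (LocalizedModule.map S g) :=
  ⟨LocalizedModule.map_injective S f h.inj, LocalizedModule.map_exact S f g h.ex,
    LocalizedModule.map_surjective S g h.surj⟩

lemma fin_loc [Module.Finite R A] : Module.Finite (Localization S) (LocalizedModule S A) :=
  Module.Finite.of_isLocalizedModule S (LocalizedModule.mkLinearMap S A)

lemma proj_loc [Module.Projective R A] :
    Module.Projective (Localization S) (LocalizedModule S A) :=
  Module.projective_of_isLocalizedModule S (LocalizedModule.mkLinearMap S A)

lemma extend_loc [IsNoetherianRing R] [Module.Finite R A] {f : A →ₗ[R] B}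
    (H : ∀ φ : A →ₗ[R] R, ∃ ψ : B →ₗ[R] R, ψ ∘ₗ f = φ)
    (φ : LocalizedModule S A →ₗ[Localization S] Localization S) :
    ∃ ψ : LocalizedModule S B →ₗ[Localization S] Localization S,
      ψ ∘ₗ LocalizedModule.map S f = φ := by
  have : Module.FinitePresentation R A := Module.finitePresentation_of_finite R A
  obtain ⟨h, s, hs⟩ := Module.FinitePresentation.exists_lift_of_isLocalizedModule S
    (Algebra.linearMap R (Localization S))
    ((φ.restrictScalars R) ∘ₗ LocalizedModule.mkLinearMap S A)
  obtain ⟨ψ, hψ⟩ := H h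
  have hu : ∀ x : S, IsUnit ((algebraMap R (Module.End R (Localization S))) x) :=
    fun x => IsLocalizedModule.map_units (Algebra.linearMap R (Localization S)) x
  let Ψ0 := IsLocalizedModule.lift S (LocalizedModule.mkLinearMap S B)
    (Algebra.linearMap R (Localization S) ∘ₗ ψ) hu
  have hΨ0 : ∀ b, Ψ0 (LocalizedModule.mkLinearMap S B b) = algebraMap R (Localization S) (ψ b) :=
    fun b => IsLocalizedModule.lift_apply S _ _ hu b
  let Ψ := Ψ0.extendScalarsOfIsLocalization S (Localization S)
  refine ⟨(Localization.mk 1 s : Localization S) • Ψ, ?_⟩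
  have key : ((((Localization.mk 1 s : Localization S) • Ψ) ∘ₗ
      LocalizedModule.map S f).restrictScalars R) = φ.restrictScalars R := by
    apply IsLocalizedModule.ext S (LocalizedModule.mkLinearMap S A) hu
    ext a
    have h1 : (LocalizedModule.map S f) (LocalizedModule.mkLinearMap S A a) =
        LocalizedModule.mkLinearMap S B (f a) := LocalizedModule.map_mk S f a 1
    have h2 : algebraMap R (Localization S) (h a) =
        (s : R) • φ (LocalizedModule.mkLinearMap S A a) := LinearMap.congr_fun hs a
    show (Localization.mk 1 s : Localization S) * Ψ0 ((LocalizedModule.map S f)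
      (LocalizedModule.mkLinearMap S A a)) = φ (LocalizedModule.mkLinearMap S A a)
    rw [h1, hΨ0]
    have h3 : ψ (f a) = h a := LinearMap.congr_fun hψ a
    rw [h3, h2, Algebra.smul_def, ← mul_assoc]
    have : (Localization.mk 1 s : Localization S) * algebraMap R (Localization S) s = 1 := by
      rw [← Localization.mk_one_eq_algebraMap, Localization.mk_mul, ← Localization.mk_one]
      rw [one_mul, mul_one]
      exact (Localization.mk_self s).trans Localization.mk_one.symm
    rw [this, one_mul]
  ext x
  exact LinearMap.congr_fun key x

lemma ex_loc [IsNoetherianRing R] (n : ℕ) (X : Type u) [AddCommGroup X] [Module R X]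
    [Module.Finite R X] (h : ExV (R := R) (n+1) X R) :
    ExV (R := Localization S) (n+1) (LocalizedModule S X) (Localization S) := by
  induction n generalizing X with
  | zero =>
    obtain ⟨m, g, hg⟩ := Module.Finite.exists_fin' R X
    have hs := SES.ker hg
    have := proj_loc S (A := Fin m → R)
    exact ex_one_of (hs.loc S) (extend_loc S (ex_one_imp hs h))
  | succ n ih =>
    obtain ⟨m, g, hg⟩ := Module.Finite.exists_fin' R X
    have hs := SES.ker hg
    have := proj_loc S (A := Fin m → R)
    exact (ex_shift (hs.loc S)).2 (ih _ ((ex_shift hs).1 h))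

abbrev LM (X : ModuleCat.{u} R) : ModuleCat.{u} (Localization S) :=
  ModuleCat.of (Localization S) (LocalizedModule S X)

lemma Syz.loc (b : ℕ) {M : ModuleCat.{u} R} (h : Syz b M) : Syz b (LM S M) := by
  induction b generalizing M with
  | zero => trivial
  | succ b ih =>
    obtain ⟨P, C, f, g, hs, h1, h2, hC⟩ := h
    exact ⟨LM S P, LM S C, _, _, hs.loc S, fin_loc S, proj_loc S, ih hC⟩

lemma PD.loc (b : ℕ) {M : ModuleCat.{u} R} (h : PD b M) : PD b (LM S M) := by
  induction b generalizing M with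
  | zero =>
    have := h.1
    have := h.2
    exact ⟨fin_loc S, proj_loc S⟩
  | succ b ih =>
    obtain ⟨K, P, f, g, hs, h1, h2, hC⟩ := h
    exact ⟨LM S K, LM S P, _, _, hs.loc S, fin_loc S, proj_loc S, ih hC⟩

lemma GG.loc [IsNoetherianRing R] {G : ModuleCat.{u} R} (h : GG G) : GG (LM S G) := by
  refine ⟨fun Y => ∃ G, GG G ∧ Y = LM S G, ⟨G, h, rfl⟩, ?_⟩
  rintro _ ⟨G, hG, rfl⟩
  obtain ⟨h1, h2, P, G', f, g, hs, hf, hp, hC⟩ := hG.step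
  exact ⟨fin_loc S, fun n => ex_loc S n _ (h2 n), LM S P, LM S G', _, _, hs.loc S, fin_loc S,
    proj_loc S, G', hC, rfl⟩
end
end HLk

namespace HLk
section
variable {R : Type u} [CommRing R]
variable {A B C X Y : Type u} [AddCommGroup A] [Module R A] [AddCommGroup B] [Module R B]
  [AddCommGroup C] [Module R C] [AddCommGroup X] [Module R X] [AddCommGroup Y] [Module R Y]

lemma ses_range (G : MinRes R X) (k : ℕ) :
    SES (LinearMap.range (G.d (k+1))).subtype (G.d k).rangeRestrict := by
  refine ⟨Submodule.subtype_injective _, fun x => ?_, LinearMap.surjective_rangeRestrict _⟩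
  have h := G.exact k
  constructor
  · intro hx
    have hx' : G.d k x = 0 := congrArg Subtype.val hx
    have : x ∈ LinearMap.range (G.d (k+1)) := by rw [h]; exact hx'
    exact ⟨⟨x, this⟩, rfl⟩
  · rintro ⟨y, rfl⟩
    have : (y : G.P (k+1)) ∈ LinearMap.ker (G.d k) := by rw [← h]; exact y.2
    exact Subtype.ext this

lemma ses_zero (G : MinRes R X) : SES (LinearMap.range (G.d 0)).subtype G.ε := by
  refine ⟨Submodule.subtype_injective _, fun x => ?_, G.surj⟩
  have h := G.exact0
  constructor
  · intro hx
    have : x ∈ LinearMap.range (G.d 0) := by rw [h]; exact hx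
    exact ⟨⟨x, this⟩, rfl⟩
  · rintro ⟨y, rfl⟩
    have : (y : G.P 0) ∈ LinearMap.ker G.ε := by rw [← h]; exact y.2
    exact this

lemma om_ex (G : MinRes R X) (k j : ℕ) (h : ExV (R := R) (k + j + 2) X R) :
    ExV (R := R) (j+1) (LinearMap.range (G.d k)) R := by
  induction k generalizing j with
  | zero =>
    rw [Nat.zero_add] at h
    have := G.projective 0
    exact (ex_shift (ses_zero G)).1 h
  | succ k ih =>
    have := G.projective (k+1)
    refine (ex_shift (ses_range G k)).1 (ih (j+1) ?_)
    rwa [show k + (j+1) + 2 = k + 1 + j + 2 by ring]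

lemma om_extend (G : MinRes R X) (k : ℕ) (h : ExV (R := R) (k+1) X R)
    (φ : LinearMap.range (G.d k) →ₗ[R] R) :
    ∃ ψ : G.P k →ₗ[R] R, ψ ∘ₗ (LinearMap.range (G.d k)).subtype = φ := by
  cases k with
  | zero => exact ex_one_imp (ses_zero G) h φ
  | succ k => exact ex_one_imp (ses_range G k) (om_ex G k 0 h) φ

lemma dual_exact (G : MinRes R X) (k : ℕ) (h : ExV (R := R) (k+1) X R) :
    Function.Exact (G.d k).dualMap (G.d (k+1)).dualMap := by
  intro φ
  constructor
  · intro hφ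
    obtain ⟨φ', hφ'⟩ := lift_surj (ses_range G k).surj φ (by
      intro x hx
      obtain ⟨⟨_, y, rfl⟩, rfl⟩ := ((ses_range G k).ex x).1 hx
      exact LinearMap.congr_fun hφ y)
    obtain ⟨ψ, hψ⟩ := om_extend G k h φ'
    refine ⟨ψ, ?_⟩
    rw [← hφ', ← hψ]
    rfl
  · rintro ⟨ψ, rfl⟩
    ext x
    show ψ (G.d k (G.d (k+1) x)) = 0
    have : G.d (k+1) x ∈ LinearMap.ker (G.d k) := by rw [← G.exact k]; exact ⟨x, rfl⟩
    rw [LinearMap.mem_ker.1 this, map_zero]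

lemma z_syz (G : MinRes R X) (b k : ℕ)
    (h : ∀ i, k < i → i < k + b + 1 → ExV (R := R) i X R) :
    Syz (b+1) (ModuleCat.of R (LinearMap.range (G.d k).dualMap)) := by
  have h1 := G.projective (k+1)
  have h2 := G.finite (k+1)
  induction b generalizing k with
  | zero =>
    exact ⟨ModuleCat.of R (Module.Dual R (G.P (k+1))), ModuleCat.of R _,
      (LinearMap.range (G.d k).dualMap).subtype, _, SES.mkQ (Submodule.subtype_injective _),
      dual_fin, dual_proj, trivial⟩
  | succ b ih =>
    refine ⟨ModuleCat.of R (Module.Dual R (G.P (k+1))),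
      ModuleCat.of R (LinearMap.range (G.d (k+1)).dualMap),
      (LinearMap.range (G.d k).dualMap).subtype, (G.d (k+1)).dualMap.rangeRestrict,
      ⟨Submodule.subtype_injective _, fun x => ?_, LinearMap.surjective_rangeRestrict _⟩,
      dual_fin, dual_proj, ih (k+1) (fun i hi hi' => h i (by omega) (by omega))
        (G.projective _) (G.finite _)⟩
    have he := dual_exact G k (h (k+1) (by omega) (by omega)) x
    constructor
    · intro hx
      obtain ⟨y, rfl⟩ := he.1 (congrArg Subtype.val hx)
      exact ⟨⟨_, y, rfl⟩, rfl⟩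
    · rintro ⟨⟨_, y, rfl⟩, rfl⟩
      exact Subtype.ext (he.2 ⟨y, rfl⟩)

lemma Syz.iso (b : ℕ) {M N : ModuleCat.{u} R} (e : N ≃ₗ[R] M) (h : Syz b M) : Syz b N := by
  cases b with
  | zero => trivial
  | succ b =>
    obtain ⟨P, C, f, g, hs, h1, h2, hC⟩ := h
    exact ⟨P, C, _, g, hs.congr_left e, h1, h2, hC⟩

lemma cover_surj [Module.Projective R A] (f : A →ₗ[R] C) (g : B →ₗ[R] C)
    (hr : LinearMap.range f = LinearMap.range g) (hg : (LinearMap.ker g).IsSuperfluous) :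
    ∃ a : A →ₗ[R] B, g ∘ₗ a = f ∧ Function.Surjective a := by
  obtain ⟨a, ha⟩ := Module.projective_lifting_property g.rangeRestrict
    (f.codRestrict (LinearMap.range g) (fun x => by rw [← hr]; exact ⟨x, rfl⟩))
    (LinearMap.surjective_rangeRestrict g)
  have ha' : ∀ x, g (a x) = f x := fun x => congrArg Subtype.val (LinearMap.congr_fun ha x)
  refine ⟨a, LinearMap.ext ha', ?_⟩
  rw [← LinearMap.range_eq_top]
  apply hg
  rw [eq_top_iff]
  intro y _
  obtain ⟨x, hx⟩ : g y ∈ LinearMap.range f := by rw [hr]; exact ⟨y, rfl⟩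
  rw [Submodule.mem_sup]
  exact ⟨a x, ⟨x, rfl⟩, y - a x, by rw [LinearMap.mem_ker, map_sub, ha', hx, sub_self], by abel⟩

lemma cover_iso [Module.Projective R A] [Module.Projective R B] [Module.Finite R A]
    (f : A →ₗ[R] C) (g : B →ₗ[R] C)
    (hr : LinearMap.range f = LinearMap.range g) (hg : (LinearMap.ker g).IsSuperfluous)
    (hf : (LinearMap.ker f).IsSuperfluous) :
    ∃ e : A ≃ₗ[R] B, ∀ x, g (e x) = f x := by
  obtain ⟨a, ha, has⟩ := cover_surj f g hr hg
  obtain ⟨b, hb, hbs⟩ := cover_surj g f hr.symm hf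
  have h1 : Function.Injective (b ∘ₗ a) :=
    OrzechProperty.injective_of_surjective_endomorphism _ (hbs.comp has)
  have h2 : Function.Injective a := Function.Injective.of_comp h1
  exact ⟨LinearEquiv.ofBijective a ⟨h2, has⟩, fun x => LinearMap.congr_fun ha x⟩

lemma lambda_iso (F F' : MinRes R X) : Nonempty (F.lambdaMod ≃ₗ[R] F'.lambdaMod) := by
  have := F.projective
  have := F.finite
  have := F'.projective
  obtain ⟨e0, he0⟩ := cover_iso F.ε F'.ε
    (by rw [LinearMap.range_eq_top.2 F.surj, LinearMap.range_eq_top.2 F'.surj]) F'.min_eps F.min_eps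
  obtain ⟨e1, he1⟩ := cover_iso (e0.toLinearMap ∘ₗ F.d 0) (F'.d 0) (by
    rw [LinearMap.range_comp, F.exact0, F'.exact0]
    ext y
    constructor
    · rintro ⟨x, hx, rfl⟩
      exact (he0 x).trans hx
    · intro hy
      refine ⟨e0.symm y, ?_, by simp⟩
      show F.ε (e0.symm y) = 0
      rw [← he0]; simpa using hy) (F'.min_d 0) (by
    have : LinearMap.ker (e0.toLinearMap ∘ₗ F.d 0) = LinearMap.ker (F.d 0) := by
      ext x; simp
    rw [this]; exact F.min_d 0)
  refine ⟨(LinearEquiv.ofSubmodules e1.dualMap (LinearMap.range (F'.d 0).dualMap)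
    (LinearMap.range (F.d 0).dualMap) ?_).symm⟩
  ext φ
  constructor
  · rintro ⟨_, ⟨ψ, rfl⟩, rfl⟩
    refine ⟨ψ ∘ₗ e0.toLinearMap, ?_⟩
    ext x
    exact congrArg ψ (he1 x).symm
  · rintro ⟨ψ, rfl⟩
    refine ⟨_, ⟨ψ ∘ₗ e0.symm.toLinearMap, rfl⟩, ?_⟩
    ext x
    show ψ (e0.symm (F'.d 0 (e1 x))) = ψ (F.d 0 x)
    rw [he1]; simp

lemma rgr_ex {a : ℕ} (h : (a : ℕ∞) ≤ rgr R X) (i : ℕ) (hi : 0 < i) (hia : i < a) :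
    ExV (R := R) i X R := by
  obtain ⟨i, rfl⟩ : ∃ j, i = j+1 := ⟨i-1, by omega⟩
  rw [← bridge_succ]
  by_contra hn
  have : rgr R X ≤ ((i+1 : ℕ) : ℕ∞) := sInf_le ⟨i+1, rfl, hi, hn⟩
  have := h.trans this
  rw [Nat.cast_le] at this
  omega

lemma rgr_pos : 1 ≤ rgr R X := by
  refine le_sInf ?_
  rintro _ ⟨k, rfl, hk, _⟩
  exact_mod_cast hk

lemma length_le [IsLocalRing R] (rs : List R) (hr : ∀ r ∈ rs, r ∈ IsLocalRing.maximalIdeal R)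
    (hw : RingTheory.Sequence.IsWeaklyRegular R rs) : (rs.length : ℕ∞) ≤ rdepth R := by
  refine le_sInf ?_
  rintro _ ⟨k, rfl, hk⟩
  by_contra hlt
  rw [not_le, Nat.cast_lt] at hlt
  have hX : ∀ r ∈ rs, ∀ m : R ⧸ IsLocalRing.maximalIdeal R, r • m = 0 := by
    intro r hr' m
    obtain ⟨m, rfl⟩ := Ideal.Quotient.mk_surjective m
    rw [Algebra.smul_def]
    show Ideal.Quotient.mk _ r * _ = 0
    rw [Ideal.Quotient.eq_zero_iff_mem.2 (hr r hr'), zero_mul]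
  have := ex_reg_seq rs hX hw k hlt
  apply hk
  cases k with
  | zero => exact bridge_zero _ _ this
  | succ k => exact (bridge_succ _ _ _).2 this

lemma choose_ab (r s : ℕ∞) (hr : 1 ≤ r) (hs : 1 ≤ s) (d : ℕ) (h : (d : ℕ∞) ≤ r + s - 1) :
    ∃ a b : ℕ, 0 < a ∧ 0 < b ∧ (a : ℕ∞) ≤ r ∧ (b : ℕ∞) ≤ s ∧ d + 1 ≤ a + b := by
  induction r using ENat.recTopCoe with
  | top => exact ⟨d+1, 1, by omega, by omega, le_top, by exact_mod_cast hs, by omega⟩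
  | coe r =>
    induction s using ENat.recTopCoe with
    | top => exact ⟨1, d+1, by omega, by omega, by exact_mod_cast hr, le_top, by omega⟩
    | coe s =>
      have h1 : 1 ≤ r := by exact_mod_cast hr
      have h2 : 1 ≤ s := by exact_mod_cast hs
      have h3 : d ≤ r + s - 1 := by exact_mod_cast h
      exact ⟨r, s, h1, h2, le_rfl, le_rfl, by omega⟩

lemma gdim_fin (M : Type u) [AddCommGroup M] [Module R M] (h : GDim R M < ⊤) :
    ∃ n, GDimLE R n (ModuleCat.of R M) := by
  by_contra hn
  have : GDim R M = ⊤ := by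
    unfold GDim
    rw [sInf_eq_top]
    rintro _ ⟨k, rfl, hk⟩
    exact (hn ⟨k, hk⟩).elim
  exact h.ne this

theorem main [IsNoetherianRing R] (M : Type u) [AddCommGroup M] [Module R M]
    (F : MinRes R M) (hHL : IsHorizontallyLinked R M) (hfin : GDim R M < ⊤)
    (p : Ideal R) [p.IsPrime] (hp : locRingDepth R p ≤ rgr R M + rgr R F.lambdaMod - 1) :
    locGDim R p M = 0 := by
  obtain ⟨n, hn⟩ := gdim_fin M hfin
  obtain ⟨X, G, f, g, hs, hX, hG⟩ := hull n _ hn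
  obtain ⟨F', G', ⟨e⟩⟩ := hHL
  obtain ⟨eL⟩ := lambda_iso F F'
  obtain ⟨rs, hrs, hw, s, hs1, hs2⟩ := exists_max_seq (R := Localization.AtPrime p)
  obtain ⟨a, b, ha, hb, har, hbr, hab⟩ := choose_ab _ _ rgr_pos rgr_pos rs.length
    ((length_le rs hrs hw).trans hp)
  have hsyz : Syz b (ModuleCat.of R M) := by
    obtain ⟨b, rfl⟩ : ∃ j, b = j+1 := ⟨b-1, by omega⟩
    refine Syz.iso _ (M := ModuleCat.of R (LinearMap.range (G'.d 0).dualMap)) e.symm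
      (z_syz G' b 0 fun i hi hi' => ?_)
    obtain ⟨i, rfl⟩ : ∃ j, i = j+1 := ⟨i-1, by omega⟩
    exact ex_equiv eL (rgr_ex hbr (i+1) hi (by omega))
  let S := p.primeCompl
  have hsl := hs.loc S
  have hwM := wr_syz hw b _ (hsyz.loc S)
  have hwG := wr_syz hw b _ ((hG.loc S).syz b)
  have hwX : RingTheory.Sequence.IsWeaklyRegular (LM S X) (rs.take b) := wr_mid _ hsl hwM hwG
  have hXf : Module.Finite R X := by
    cases n with
    | zero => exact hX.1
    | succ n =>
      obtain ⟨_, P', _, g', hS', hPf', _⟩ := hX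
      exact Module.Finite.of_surjective g' hS'.surj
  have hE : ∀ i, 0 < i → i < a → ExV (R := Localization.AtPrime p) i (LM S X)
      (Localization.AtPrime p) := by
    intro i hi hia
    have h1 := rgr_ex har i hi hia
    obtain ⟨i, rfl⟩ : ∃ j, i = j+1 := ⟨i-1, by omega⟩
    exact ex_loc S i X (ex_mid hs h1 (hG.ex i))
  have hproj := main_local hw s hs1 hs2 n a b (LM S X) (hX.loc S) hE hwX ha hab
  have hM : GG (LM S (ModuleCat.of R M)) :=
    GG.of_syz (P := LM S X) (H := LM S G) hsl (fin_loc S) hproj (hG.loc S)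
  have h0 : locGDim R p M ≤ 0 := sInf_le ⟨0, rfl, hM.gdim⟩
  exact le_antisymm h0 zero_le
end
end HLk

section Statements

variable (R : Type u) [CommRing R] [IsNoetherianRing R]

theorem stmt4 (M : Type u) [AddCommGroup M] [Module R M] [Module.Finite R M]
    (F : MinRes R M) (hHL : IsHorizontallyLinked R M)
    (h0 : 0 < GDim R M) (hfin : GDim R M < ⊤) :
    ∀ (p : Ideal R) (h : p.IsPrime), haveI := h;
      locRingDepth R p ≤ rgr R M + rgr R F.lambdaMod - 1 → locGDim R p M = 0 := by
  intro p h hp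
  exact HLk.main M F hHL hfin p hp

end Statements
end
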